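/- arXiv:2202.04008 — 9 statements merged into one kernel-verified Lean document; each statement's English description precedes it below -/
import Mathlib

section
/- Let λ be a Borel probability measure on [0,1] and let 𝒫¹ and 𝒫² be two sequences of partitions that are log-balanced a.e. with respect to λ, with weight functions f₁ and f₂ respectively. Assume: (i) for every δ > 0, ∑_{n=1}^∞ e^{−δ f₁(n)} < ∞; (ii) f₂ is nondecreasing; (iii) f₂(n+1) − f₂(n) = o(f₂(n)) as n → ∞. Then f₂(L_n(x,𝒫¹,𝒫²))/f₁(n) → 1 as n → ∞ for λ-almost every x. -/
open MeasureTheory Filter Set Asymptotics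

noncomputable section

/-- A topological partition of `[0,1]`: an (automatically at most countable) collection of
pairwise disjoint nonempty open subintervals of `[0,1]` whose closures cover `[0,1]`. -/
def IsTopPartition (P : Set (Set ℝ)) : Prop :=
  P.Countable ∧
  (∀ I ∈ P, ∃ a b : ℝ, a < b ∧ 0 ≤ a ∧ b ≤ 1 ∧ I = Set.Ioo a b) ∧
  P.PairwiseDisjoint id ∧
  (⋃ I ∈ P, closure I) = Set.Icc (0 : ℝ) 1

/-- The set `E^Ps` of endpoints of the intervals of the partitions of the sequence `Ps`:
the points of `[0,1]` not covered by the open intervals of some partition. -/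
def endpointSet (Ps : ℕ → Set (Set ℝ)) : Set ℝ :=
  ⋃ n, (Set.Icc (0 : ℝ) 1 \ ⋃₀ Ps n)

/-- `I_n^Ps(x)`: the unique interval of the partition `P` containing `x`
(the empty set if there is none). -/
def cell (P : Set (Set ℝ)) (x : ℝ) : Set ℝ :=
  ⋃₀ {I | I ∈ P ∧ x ∈ I}

/-- A sequence of partitions is self-refining if every interval at depth `n+1` is contained
in an interval at depth `n`. -/
def SelfRefining (Ps : ℕ → Set (Set ℝ)) : Prop :=
  ∀ n, ∀ I ∈ Ps (n + 1), ∃ J ∈ Ps n, I ⊆ J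

/-- Strictly self-refining: self-refining with `P_{n+1} ≠ P_n` for all `n`. -/
def StrictSelfRefining (Ps : ℕ → Set (Set ℝ)) : Prop :=
  SelfRefining Ps ∧ ∀ n, Ps (n + 1) ≠ Ps n

/-- `Ps` is log-balanced a.e. with respect to `lam` with weight function `f`. -/
def LogBalancedAE (lam : Measure ℝ) (Ps : ℕ → Set (Set ℝ)) (f : ℕ → ℝ) : Prop :=
  lam (endpointSet Ps) = 0 ∧ Tendsto f atTop atTop ∧
    ∀ᵐ x ∂lam,
      Tendsto (fun n => -Real.log ((lam (cell (Ps n) x)).toReal) / f n) atTop (nhds 1)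

/-- `Ps` is log-balanced in measure with respect to `lam` with weight function `f`. -/
def LogBalancedInMeasure (lam : Measure ℝ) (Ps : ℕ → Set (Set ℝ)) (f : ℕ → ℝ) : Prop :=
  lam (endpointSet Ps) = 0 ∧ Tendsto f atTop atTop ∧
    TendstoInMeasure lam
      (fun n x => -Real.log ((lam (cell (Ps n) x)).toReal) / f n) atTop (fun _ => 1)

/-- The Lochs index `L_n(x, Ps¹, Ps²)`. -/
def lochsIndex (P1 P2 : ℕ → Set (Set ℝ)) (n : ℕ) (x : ℝ) : ℕ :=
  sSup {ℓ : ℕ | cell (P1 n) x ⊆ cell (P2 ℓ) x}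

/-- The generalized inverse `f^{[-1]}(y) = min {n : f n ≥ y}` of a weight function. -/
def weightInv (f : ℕ → ℝ) (y : ℝ) : ℕ := sInf {n : ℕ | y ≤ f n}

lemma cell_eq_of_mem {P : Set (Set ℝ)} (hP : IsTopPartition P) {I : Set ℝ} (hI : I ∈ P)
    {x : ℝ} (hx : x ∈ I) : cell P x = I := by
  unfold cell
  have : {J | J ∈ P ∧ x ∈ J} = {I} := by
    ext J
    constructor
    · rintro ⟨hJ, hxJ⟩
      by_contra hne
      exact Set.disjoint_left.1 (hP.2.2.1 hJ hI hne) hxJ hx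
    · rintro rfl
      exact ⟨hI, hx⟩
  rw [this, Set.sUnion_singleton]

lemma bad_measure (lam : Measure ℝ) [IsProbabilityMeasure lam] {P Q : Set (Set ℝ)}
    (hP : IsTopPartition P) (hQ : IsTopPartition Q) (c t : ENNReal) (ht0 : t ≠ 0)
    (htt : t ≠ ⊤) :
    lam {x | lam (cell P x) ≤ c ∧ t ≤ lam (cell Q x) ∧ x ∈ ⋃₀ P ∧ x ∈ ⋃₀ Q ∧
      ¬ cell P x ⊆ cell Q x} ≤ (2 * c) / t := by
  set B := {x | lam (cell P x) ≤ c ∧ t ≤ lam (cell Q x) ∧ x ∈ ⋃₀ P ∧ x ∈ ⋃₀ Q ∧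
      ¬ cell P x ⊆ cell Q x} with hB
  have hsub : B ⊆ ⋃ J ∈ Q, (B ∩ J) := by
    intro x hx
    obtain ⟨J, hJ, hxJ⟩ := hx.2.2.2.1
    exact Set.mem_biUnion hJ ⟨hx, hxJ⟩
  have hG : ∀ e : ℝ, lam {x | x ∈ cell P e ∧ lam (cell P e) ≤ c} ≤ c := by
    intro e
    by_cases h : lam (cell P e) ≤ c
    · exact (measure_mono (fun x hx => hx.1)).trans h
    · simp [h]
  have hJ : ∀ J ∈ Q, lam (B ∩ J) ≤ (2 * c / t) * lam J := by
    intro J hJ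
    by_cases htJ : t ≤ lam J
    · obtain ⟨a, b, hab, -, -, rfl⟩ := hQ.2.1 J hJ
      have h1 : B ∩ Set.Ioo a b ⊆ {x | x ∈ cell P a ∧ lam (cell P a) ≤ c} ∪
          {x | x ∈ cell P b ∧ lam (cell P b) ≤ c} := by
        rintro x ⟨⟨hc, -, ⟨I, hI, hxI⟩, -, hns⟩, hxJ⟩
        rw [cell_eq_of_mem hQ hJ hxJ, cell_eq_of_mem hP hI hxI] at hns
        rw [cell_eq_of_mem hP hI hxI] at hc
        have : a ∈ I ∨ b ∈ I := by
          obtain ⟨p, q, hpq, -, -, rfl⟩ := hP.2.1 I hI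
          by_contra hcon
          simp only [Set.mem_Ioo, not_or, not_and, not_lt] at hcon hxI hxJ
          apply hns
          apply Set.Ioo_subset_Ioo
          · by_contra! h
            linarith [hcon.1 h]
          · by_contra! h
            have := hcon.2 (by linarith)
            linarith
        rcases this with h | h
        · left
          simp only [Set.mem_setOf_eq, cell_eq_of_mem hP hI h]
          exact ⟨hxI, hc⟩
        · right
          simp only [Set.mem_setOf_eq, cell_eq_of_mem hP hI h]
          exact ⟨hxI, hc⟩
      calc lam (B ∩ Set.Ioo a b) ≤ c + c :=
            (measure_mono h1).trans ((measure_union_le _ _).trans (add_le_add (hG a) (hG b)))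
        _ = (2 * c / t) * t := by
            rw [ENNReal.div_mul_cancel ht0 htt, two_mul]
        _ ≤ _ := by gcongr
    · have : B ∩ J = ∅ := by
        ext x
        simp only [Set.mem_inter_iff, Set.mem_empty_iff_false, iff_false, not_and]
        intro hx hxJ
        apply htJ
        rw [← cell_eq_of_mem hQ hJ hxJ]
        exact hx.2.1
      simp [this]
  have hmeas : ∀ J ∈ Q, MeasurableSet J := by
    intro J hJ
    obtain ⟨a, b, -, -, -, rfl⟩ := hQ.2.1 J hJ
    exact measurableSet_Ioo
  calc lam B ≤ lam (⋃ J ∈ Q, (B ∩ J)) := measure_mono hsub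
    _ ≤ ∑' J : Q, lam (B ∩ J) := measure_biUnion_le lam hQ.1 _
    _ ≤ ∑' J : Q, (2 * c / t) * lam J := ENNReal.tsum_le_tsum fun J => hJ J J.2
    _ = (2 * c / t) * ∑' J : Q, lam J := ENNReal.tsum_mul_left
    _ = (2 * c / t) * lam (⋃ J ∈ Q, J) := by
        rw [measure_biUnion hQ.1 (f := fun J => J) hQ.2.2.1 hmeas]
    _ ≤ (2 * c / t) * 1 := by
        gcongr
        exact prob_le_one
    _ = _ := mul_one _

/-- choice of the comparison index -/
lemma exists_index (f₁ f₂ : ℕ → ℝ) (h1 : Tendsto f₁ atTop atTop) (h2 : Tendsto f₂ atTop atTop)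
    (hmono : Monotone f₂) (hlittle : (fun n => f₂ (n + 1) - f₂ n) =o[atTop] f₂)
    (ε : ℝ) (hε : 0 < ε) (hε1 : ε < 1) :
    ∃ m : ℕ → ℕ, Tendsto m atTop atTop ∧
      ∀ᶠ n in atTop, f₂ (m n) ≤ (1 - ε) * f₁ n ∧ (1 - 2 * ε) * f₁ n ≤ f₂ (m n) := by
  have hE : ∀ n, ∃ m : ℕ, f₂ 0 ≤ (1 - ε) * f₁ n →
      f₂ m ≤ (1 - ε) * f₁ n ∧ (1 - ε) * f₁ n < f₂ (m + 1) := by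
    intro n
    have hex : ∃ k, (1 - ε) * f₁ n < f₂ k := (h2.eventually_gt_atTop _).exists
    classical
    refine ⟨Nat.find hex - 1, fun h0 => ?_⟩
    have hpos : 0 < Nat.find hex := by
      rw [Nat.find_pos]
      exact not_lt.2 h0
    refine ⟨not_lt.1 (Nat.find_min hex (by omega)), ?_⟩
    rw [Nat.sub_add_cancel hpos]
    exact Nat.find_spec hex
  choose m hm using hE
  have h1' : Tendsto (fun n => (1 - ε) * f₁ n) atTop atTop :=
    h1.const_mul_atTop (by linarith)
  have hmt : Tendsto m atTop atTop := by
    rw [tendsto_atTop]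
    intro b
    filter_upwards [h1'.eventually_ge_atTop (f₂ 0), h1'.eventually_ge_atTop (f₂ b)] with n hn hb
    have := (hm n hn).2
    by_contra! hlt
    have := hmono (show m n + 1 ≤ b by omega)
    linarith
  refine ⟨m, hmt, ?_⟩
  have hl := hmt.eventually (hlittle.def hε)
  have hp := hmt.eventually (h2.eventually_ge_atTop 0)
  filter_upwards [h1'.eventually_ge_atTop (f₂ 0), hl, hp, h1.eventually_ge_atTop 0]
    with n hn hl hp h1p
  obtain ⟨ha, hb⟩ := hm n hn
  refine ⟨ha, ?_⟩
  rw [Real.norm_eq_abs, Real.norm_eq_abs, abs_of_nonneg hp] at hl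
  have := le_abs_self (f₂ (m n + 1) - f₂ (m n))
  have h3 : (1 - ε) * f₁ n ≤ (1 + ε) * f₂ (m n) := by linarith
  have h4 : ε * f₂ (m n) ≤ ε * ((1 - ε) * f₁ n) := by gcongr
  nlinarith [mul_nonneg (sq_nonneg ε) h1p]

lemma bdd_index (lam : Measure ℝ) [IsProbabilityMeasure lam] (P1 P2 : ℕ → Set (Set ℝ))
    (f₂ : ℕ → ℝ) (h2 : Tendsto f₂ atTop atTop) (x : ℝ)
    (hx : Tendsto (fun n => -Real.log ((lam (cell (P2 n) x)).toReal) / f₂ n) atTop (nhds 1))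
    (n : ℕ) (hn : 0 < (lam (cell (P1 n) x)).toReal) :
    BddAbove {ℓ : ℕ | cell (P1 n) x ⊆ cell (P2 ℓ) x} := by
  have ha := hx.eventually (lt_mem_nhds (show (1/2 : ℝ) < 1 by norm_num))
  have hb := h2.eventually_gt_atTop (max 0 (2 * -Real.log ((lam (cell (P1 n) x)).toReal)))
  obtain ⟨N, hN⟩ := eventually_atTop.1 (ha.and hb)
  refine ⟨N, fun l hl => ?_⟩
  by_contra! hlt
  obtain ⟨h3, h4⟩ := hN l hlt.le
  have hle : (lam (cell (P1 n) x)).toReal ≤ (lam (cell (P2 l) x)).toReal :=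
    ENNReal.toReal_mono (measure_ne_top _ _) (measure_mono hl)
  have hlog := Real.log_le_log hn hle
  have h5 := (le_max_left _ _).trans_lt h4
  have h6 := (le_max_right _ _).trans_lt h4
  rw [lt_div_iff₀ h5] at h3
  linarith

lemma pos_of_log_ne {p : ℝ} (h0 : 0 ≤ p) (h : Real.log p ≠ 0) : 0 < p := by
  rcases h0.lt_or_eq with h1 | h1
  · exact h1
  · exact absurd (by rw [← h1, Real.log_zero]) h

lemma eventually_pos (lam : Measure ℝ) [IsProbabilityMeasure lam] (P1 : ℕ → Set (Set ℝ))
    (f : ℕ → ℝ) (x : ℝ)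
    (hx : Tendsto (fun n => -Real.log ((lam (cell (P1 n) x)).toReal) / f n) atTop (nhds 1)) :
    ∀ᶠ n in atTop, 0 < (lam (cell (P1 n) x)).toReal := by
  filter_upwards [hx.eventually (lt_mem_nhds (show (0 : ℝ) < 1 by norm_num))] with n hn
  apply pos_of_log_ne ENNReal.toReal_nonneg
  intro h
  simp [h] at hn

lemma ae_mem (lam : Measure ℝ) (hlam : lam (Set.Icc (0 : ℝ) 1)ᶜ = 0) (P : ℕ → Set (Set ℝ))
    (h : lam (endpointSet P) = 0) : ∀ᵐ x ∂lam, ∀ n, x ∈ ⋃₀ P n := by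
  have h1 : ∀ᵐ x ∂lam, x ∉ (Set.Icc (0 : ℝ) 1)ᶜ := measure_eq_zero_iff_ae_notMem.1 hlam
  have h2 : ∀ᵐ x ∂lam, x ∉ endpointSet P := measure_eq_zero_iff_ae_notMem.1 h
  filter_upwards [h1, h2] with x hx1 hx2 n
  by_contra hn
  exact hx2 (Set.mem_iUnion.2 ⟨n, not_not.1 hx1, hn⟩)

lemma lower_bound (lam : Measure ℝ) [IsProbabilityMeasure lam]
    (hlam : lam (Set.Icc (0 : ℝ) 1)ᶜ = 0)
    (P1 P2 : ℕ → Set (Set ℝ))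
    (hP1 : ∀ n, IsTopPartition (P1 n)) (hP2 : ∀ n, IsTopPartition (P2 n))
    (f₁ f₂ : ℕ → ℝ)
    (hb1 : LogBalancedAE lam P1 f₁) (hb2 : LogBalancedAE lam P2 f₂)
    (hsum : ∀ δ : ℝ, 0 < δ → Summable fun n => Real.exp (-δ * f₁ n))
    (hmono : Monotone f₂)
    (hlittle : (fun n => f₂ (n + 1) - f₂ n) =o[atTop] f₂) (ε : ℝ) (hε : 0 < ε) (hε1 : ε < 1) :
    ∀ᵐ x ∂lam, ∀ᶠ n in atTop, (1 - 2 * ε) * f₁ n ≤ f₂ (lochsIndex P1 P2 n x) := by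
  obtain ⟨he1, ht1, hx1⟩ := hb1
  obtain ⟨he2, ht2, hx2⟩ := hb2
  obtain ⟨m, hm, hmf⟩ := exists_index f₁ f₂ ht1 ht2 hmono hlittle ε hε hε1
  set η := ε / 4 with hη
  let c : ℕ → ENNReal := fun n => ENNReal.ofReal (Real.exp (-(1 - η) * f₁ n))
  let t : ℕ → ENNReal := fun n => ENNReal.ofReal (Real.exp (-(1 + η) * f₂ (m n)))
  let B : ℕ → Set ℝ := fun n => {x | f₂ (m n) ≤ (1 - ε) * f₁ n ∧
    x ∈ {x | lam (cell (P1 n) x) ≤ c n ∧ t n ≤ lam (cell (P2 (m n)) x) ∧ x ∈ ⋃₀ P1 n ∧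
      x ∈ ⋃₀ P2 (m n) ∧ ¬ cell (P1 n) x ⊆ cell (P2 (m n)) x}}
  set δ := ε - 2 * η + η * ε with hδ
  have hδ0 : 0 < δ := by rw [hδ, hη]; nlinarith
  have hBle : ∀ n, lam (B n) ≤ ENNReal.ofReal (2 * Real.exp (-δ * f₁ n)) := by
    intro n
    by_cases h : f₂ (m n) ≤ (1 - ε) * f₁ n
    · refine (measure_mono (fun x hx => hx.2)).trans
        ((bad_measure lam (hP1 n) (hP2 (m n)) (c n) (t n) ?_ ?_).trans ?_)
      · simp [t, Real.exp_pos]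
      · simp [t]
      · simp only [c, t]
        rw [show (2 : ENNReal) = ENNReal.ofReal 2 by simp, ← ENNReal.ofReal_mul (by norm_num),
          ← ENNReal.ofReal_div_of_pos (Real.exp_pos _)]
        apply ENNReal.ofReal_le_ofReal
        rw [mul_div_assoc, ← Real.exp_sub]
        gcongr
        have : (1 + η) * f₂ (m n) ≤ (1 + η) * ((1 - ε) * f₁ n) := by
          have : 0 < η := by rw [hη]; linarith
          gcongr
        rw [hδ]
        linarith
    · have : B n = ∅ := by
        ext x
        simp [B, h]
      simp [this]
  have hBC : ∀ᵐ x ∂lam, ∀ᶠ n in atTop, x ∉ B n := by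
    apply ae_eventually_notMem
    have hs := (hsum δ hδ0).mul_left 2
    exact ne_top_of_le_ne_top hs.tsum_ofReal_ne_top (ENNReal.tsum_le_tsum hBle)
  filter_upwards [hBC, hx1, hx2, ae_mem lam hlam P1 he1, ae_mem lam hlam P2 he2]
    with x hB h1 h2 hm1 hm2
  have hη0 : 0 < η := by rw [hη]; linarith
  have e1 := h1.eventually (lt_mem_nhds (show 1 - η < 1 by linarith))
  have e2 := hm.eventually (h2.eventually (gt_mem_nhds (show 1 < 1 + η by linarith)))
  have e3 := hm.eventually (eventually_pos lam P2 f₂ x h2)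
  have e4 := hm.eventually (ht2.eventually_gt_atTop 0)
  filter_upwards [hB, e1, e2, e3, e4, eventually_pos lam P1 f₁ x h1, hmf,
    ht1.eventually_gt_atTop 0] with n hB e1 e2 e3 e4 e5 hmf e6
  have hin : cell (P1 n) x ⊆ cell (P2 (m n)) x := by
    by_contra hns
    apply hB
    refine ⟨hmf.1, ?_, ?_, hm1 n, hm2 (m n), hns⟩
    · rw [lt_div_iff₀ e6] at e1
      apply (ENNReal.le_ofReal_iff_toReal_le (measure_ne_top _ _) (Real.exp_pos _).le).2
      rw [← Real.log_le_iff_le_exp e5]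
      linarith
    · rw [div_lt_iff₀ e4] at e2
      apply (ENNReal.ofReal_le_iff_le_toReal (measure_ne_top _ _)).2
      rw [← Real.le_log_iff_exp_le e3]
      linarith
  have : m n ≤ lochsIndex P1 P2 n x :=
    le_csSup (bdd_index lam P1 P2 f₂ ht2 x h2 n e5) hin
  exact hmf.2.trans (hmono this)

lemma upper_bound (lam : Measure ℝ) [IsProbabilityMeasure lam]
    (P1 P2 : ℕ → Set (Set ℝ)) (f₁ f₂ : ℕ → ℝ)
    (ht1 : Tendsto f₁ atTop atTop) (ht2 : Tendsto f₂ atTop atTop)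
    (hmono : Monotone f₂) (x : ℝ)
    (h1 : Tendsto (fun n => -Real.log ((lam (cell (P1 n) x)).toReal) / f₁ n) atTop (nhds 1))
    (h2 : Tendsto (fun n => -Real.log ((lam (cell (P2 n) x)).toReal) / f₂ n) atTop (nhds 1))
    (b : ℝ) (hb : 1 < b) :
    ∀ᶠ n in atTop, f₂ (lochsIndex P1 P2 n x) < b * f₁ n := by
  -- choose r with 1 < r and r < b * s, s < 1
  obtain ⟨r, hr1, hrb⟩ := exists_between hb
  have hb0 : 0 < b := by linarith
  have hs : r / b < 1 := (div_lt_one hb0).2 hrb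
  have e2 := h2.eventually (lt_mem_nhds hs)
  obtain ⟨N, hN⟩ := eventually_atTop.1 (e2.and (ht2.eventually_gt_atTop 0))
  filter_upwards [h1.eventually (gt_mem_nhds hr1), eventually_pos lam P1 f₁ x h1,
    ht1.eventually_gt_atTop 0, ht1.eventually_gt_atTop (f₂ N)] with n e1 e5 e6 e7
  have hsmall : lochsIndex P1 P2 n x ≤ N → f₂ (lochsIndex P1 P2 n x) < b * f₁ n := by
    intro h
    have := hmono h
    nlinarith
  by_cases hL : lochsIndex P1 P2 n x ≤ N
  · exact hsmall hL
  push Not at hL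
  have hne : {ℓ : ℕ | cell (P1 n) x ⊆ cell (P2 ℓ) x}.Nonempty := by
    by_contra hne
    rw [Set.not_nonempty_iff_eq_empty] at hne
    unfold lochsIndex at hL
    rw [hne] at hL
    simp at hL
  have hmem : cell (P1 n) x ⊆ cell (P2 (lochsIndex P1 P2 n x)) x :=
    Nat.sSup_mem hne (bdd_index lam P1 P2 f₂ ht2 x h2 n e5)
  obtain ⟨h3, h4⟩ := hN _ hL.le
  have hle := ENNReal.toReal_mono (measure_ne_top lam _) (measure_mono hmem)
  have hlog := Real.log_le_log e5 hle
  rw [lt_div_iff₀ h4] at h3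
  rw [div_lt_iff₀ e6] at e1
  have h5 : r / b * f₂ (lochsIndex P1 P2 n x) < r * f₁ n := by linarith
  rw [div_mul_eq_mul_div, div_lt_iff₀ hb0] at h5
  have hr0 : 0 < r := by linarith
  nlinarith

/-- Theorem (Lochs-type theorem a.e.). -/
theorem lochs_type_ae (lam : Measure ℝ) [IsProbabilityMeasure lam]
    (hlam : lam (Set.Icc (0 : ℝ) 1)ᶜ = 0)
    (P1 P2 : ℕ → Set (Set ℝ))
    (hP1 : ∀ n, IsTopPartition (P1 n)) (hP2 : ∀ n, IsTopPartition (P2 n))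
    (f₁ f₂ : ℕ → ℝ)
    (hb1 : LogBalancedAE lam P1 f₁) (hb2 : LogBalancedAE lam P2 f₂)
    (hsum : ∀ δ : ℝ, 0 < δ → Summable fun n => Real.exp (-δ * f₁ n))
    (hmono : Monotone f₂)
    (hlittle : (fun n => f₂ (n + 1) - f₂ n) =o[atTop] f₂) :
    ∀ᵐ x ∂lam,
      Tendsto (fun n => f₂ (lochsIndex P1 P2 n x) / f₁ n) atTop (nhds 1) := by
  have hlow : ∀ᵐ x ∂lam, ∀ k : ℕ, ∀ᶠ n in atTop,
      (1 - 2 * (1 / ((k : ℝ) + 2))) * f₁ n ≤ f₂ (lochsIndex P1 P2 n x) := by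
    rw [ae_all_iff]
    intro k
    have hk : (0 : ℝ) ≤ k := Nat.cast_nonneg k
    refine lower_bound lam hlam P1 P2 hP1 hP2 f₁ f₂ hb1 hb2 hsum hmono hlittle _ (by positivity) ?_
    rw [div_lt_one (by positivity)]
    linarith
  filter_upwards [hlow, hb1.2.2, hb2.2.2] with x hx h1 h2
  have hpos := hb1.2.1.eventually_gt_atTop 0
  rw [tendsto_order]
  constructor
  · intro a ha
    obtain ⟨k, hk⟩ := exists_nat_gt (2 / (1 - a))
    have ha' : 0 < 1 - a := by linarith
    filter_upwards [hx k, hpos] with n hn hp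
    rw [lt_div_iff₀ hp]
    refine lt_of_lt_of_le ?_ hn
    gcongr
    have hk0 : (0 : ℝ) ≤ k := Nat.cast_nonneg k
    rw [div_lt_iff₀ ha'] at hk
    have : 2 * (1 / ((k : ℝ) + 2)) < 1 - a := by
      rw [mul_one_div, div_lt_iff₀ (by positivity)]
      nlinarith
    linarith
  · intro b hb
    filter_upwards [upper_bound lam P1 P2 f₁ f₂ hb1.2.1 hb2.2.1 hmono x h1 h2 b hb, hpos]
      with n hn hp
    rwa [div_lt_iff₀ hp]
end
end

section
/- Let λ be a Borel probability measure on [0,1] and let 𝒫¹ and 𝒫² be two sequences of partitions that are log-balanced a.e. with respect to λ, with weight functions f₁ and f₂ respectively. Assume: (i) f₂ is nondecreasing; (ii) for each η ∈ (0,1) there exists ε > 0 such that ∑_{n=1}^∞ e^{−(1−ε)f₁(n) + (1+ε)f₂(m(n))} < +∞, where m(n) := f₂^{[-1]}((1−η)f₁(n)). Then liminf_{n→∞} f₂(L_n(x,𝒫¹,𝒫²))/f₁(n) ≥ 1 for λ-almost every x. -/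
open MeasureTheory Filter Set Asymptotics

noncomputable section

theorem cell_eq {P : Set (Set ℝ)} (hP : IsTopPartition P) {x : ℝ} {I : Set ℝ}
    (hI : I ∈ P) (hx : x ∈ I) : cell P x = I := by
  have : {J | J ∈ P ∧ x ∈ J} = {I} := by
    ext J
    constructor
    · rintro ⟨hJ, hxJ⟩
      by_contra hne
      exact Set.disjoint_left.1 (hP.2.2.1 hJ hI hne) hxJ hx
    · rintro rfl
      exact ⟨hI, hx⟩
  rw [cell, this, Set.sUnion_singleton]

theorem bound_pt (lam : Measure ℝ) {P : Set (Set ℝ)} (hP : IsTopPartition P) (c : ENNReal) (a : ℝ) :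
    lam {x | ∃ I ∈ P, x ∈ I ∧ a ∈ I ∧ lam I ≤ c} ≤ c := by
  rcases Set.eq_empty_or_nonempty {x | ∃ I ∈ P, x ∈ I ∧ a ∈ I ∧ lam I ≤ c} with h | ⟨x, I, hI, hx, ha, hc⟩
  · rw [h]; simp
  · refine (measure_mono ?_).trans hc
    rintro y ⟨J, hJ, hy, haJ, -⟩
    rw [← cell_eq hP hI ha, cell_eq hP hJ haJ]
    exact hy

theorem bound_J (lam : Measure ℝ) {P Q : Set (Set ℝ)} (hP : IsTopPartition P)
    (hQ : IsTopPartition Q) (c : ENNReal) {J : Set ℝ} (hJ : J ∈ Q) :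
    lam {x | x ∈ J ∧ ∃ I ∈ P, x ∈ I ∧ lam I ≤ c ∧ ¬ I ⊆ J} ≤ 2 * c := by
  obtain ⟨a, b, hab, -, -, rfl⟩ := hQ.2.1 J hJ
  rw [two_mul]
  refine le_trans (le_trans (measure_mono ?_) (measure_union_le _ _))
    (add_le_add (bound_pt lam hP c a) (bound_pt lam hP c b))
  rintro x ⟨hxJ, I, hI, hxI, hc, hn⟩
  obtain ⟨y, hyI, hyJ⟩ := Set.not_subset.1 hn
  have hconn : I.OrdConnected := by
    obtain ⟨u, v, -, -, -, rfl⟩ := hP.2.1 I hI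
    exact Set.ordConnected_Ioo
  by_cases hya : y ≤ a
  · exact Or.inl ⟨I, hI, hxI, hconn.out hyI hxI ⟨hya, hxJ.1.le⟩, hc⟩
  · refine Or.inr ⟨I, hI, hxI, hconn.out hxI hyI ⟨hxJ.2.le, ?_⟩, hc⟩
    by_contra hyb
    exact hyJ ⟨not_le.1 hya, not_le.1 hyb⟩

theorem bound_bad (lam : Measure ℝ) [IsProbabilityMeasure lam] {P Q : Set (Set ℝ)}
    (hP : IsTopPartition P) (hQ : IsTopPartition Q) (c d : ENNReal) (hd : d ≠ 0) (hd' : d ≠ ⊤) :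
    lam {x | lam (cell P x) ≤ c ∧ d ≤ lam (cell Q x) ∧ ¬ cell P x ⊆ cell Q x}
      ≤ 2 * c / d := by
  have hQc : Countable Q := hQ.1.to_subtype
  have hsub : {x | lam (cell P x) ≤ c ∧ d ≤ lam (cell Q x) ∧ ¬ cell P x ⊆ cell Q x} ⊆
      ⋃ J : Q, {x | d ≤ lam J.1 ∧ (x ∈ J.1 ∧ ∃ I ∈ P, x ∈ I ∧ lam I ≤ c ∧ ¬ I ⊆ J.1)} := by
    rintro x ⟨h1, h2, h3⟩
    have e2 : (cell Q x).Nonempty := by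
      rw [Set.nonempty_iff_ne_empty]
      intro h
      rw [h, measure_empty] at h2
      exact hd (le_antisymm h2 bot_le)
    obtain ⟨-, J, ⟨hJ, hxJ⟩, -⟩ := e2
    obtain ⟨y, ⟨I, ⟨hI, hxI⟩, -⟩, -⟩ := Set.not_subset.1 h3
    rw [cell_eq hP hI hxI] at h1 h3
    rw [cell_eq hQ hJ hxJ] at h2 h3
    exact Set.mem_iUnion.2 ⟨⟨J, hJ⟩, h2, hxJ, I, hI, hxI, h1, h3⟩
  calc _ ≤ _ := measure_mono hsub
    _ ≤ ∑' J : Q, lam {x | d ≤ lam J.1 ∧ (x ∈ J.1 ∧ ∃ I ∈ P, x ∈ I ∧ lam I ≤ c ∧ ¬ I ⊆ J.1)} :=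
        measure_iUnion_le _
    _ ≤ ∑' J : Q, (2 * c / d) * lam J.1 := by
        refine ENNReal.tsum_le_tsum fun J => ?_
        by_cases h : d ≤ lam J.1
        · refine (measure_mono (fun x hx => hx.2)).trans ((bound_J lam hP hQ c J.2).trans ?_)
          calc 2 * c = 2 * c / d * d := (ENNReal.div_mul_cancel hd hd').symm
            _ ≤ _ := by gcongr
        · simp [h]
    _ = (2 * c / d) * lam (⋃ J : Q, J.1) := by
        rw [ENNReal.tsum_mul_left, measure_iUnion]
        · intro J K hJK
          exact hQ.2.2.1 J.2 K.2 (fun h => hJK (Subtype.ext h))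
        · intro J
          obtain ⟨a, b, -, -, -, h⟩ := hQ.2.1 J.1 J.2
          rw [h]; exact measurableSet_Ioo
    _ ≤ (2 * c / d) * 1 := by gcongr; exact prob_le_one
    _ = _ := mul_one _

theorem weightInv_spec {f : ℕ → ℝ} (hf : Tendsto f atTop atTop) (y : ℝ) :
    y ≤ f (weightInv f y) := by
  have : {n : ℕ | y ≤ f n}.Nonempty := (hf.eventually_ge_atTop y).exists
  exact Nat.sInf_mem this

theorem eventually_subset (lam : Measure ℝ) [IsProbabilityMeasure lam]
    (P1 P2 : ℕ → Set (Set ℝ))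
    (hP1 : ∀ n, IsTopPartition (P1 n)) (hP2 : ∀ n, IsTopPartition (P2 n))
    (f₁ f₂ : ℕ → ℝ)
    (hb1 : LogBalancedAE lam P1 f₁) (hb2 : LogBalancedAE lam P2 f₂)
    (ε : ℝ) (hε : 0 < ε) (m : ℕ → ℕ) (hm : Tendsto m atTop atTop)
    (hs : Summable fun n => Real.exp (-(1 - ε) * f₁ n + (1 + ε) * f₂ (m n))) :
    ∀ᵐ x ∂lam, ∀ᶠ n in atTop, cell (P1 n) x ⊆ cell (P2 (m n)) x := by
  have hBC := ae_eventually_notMem (μ := lam) (s := fun n =>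
    {x | lam (cell (P1 n) x) ≤ ENNReal.ofReal (Real.exp (-(1 - ε) * f₁ n)) ∧
      ENNReal.ofReal (Real.exp (-((1 + ε) * f₂ (m n)))) ≤ lam (cell (P2 (m n)) x) ∧
      ¬ cell (P1 n) x ⊆ cell (P2 (m n)) x}) (by
    refine ne_top_of_le_ne_top ?_ (ENNReal.tsum_le_tsum fun n =>
      bound_bad lam (hP1 n) (hP2 (m n)) _ _
        (by simpa using Real.exp_pos _) ENNReal.ofReal_ne_top)
    have : ∀ n, 2 * ENNReal.ofReal (Real.exp (-(1 - ε) * f₁ n)) /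
        ENNReal.ofReal (Real.exp (-((1 + ε) * f₂ (m n)))) =
        2 * ENNReal.ofReal (Real.exp (-(1 - ε) * f₁ n + (1 + ε) * f₂ (m n))) := by
      intro n
      rw [mul_div_assoc, ← ENNReal.ofReal_div_of_pos (Real.exp_pos _), ← Real.exp_sub, sub_neg_eq_add]
    simp_rw [this]
    rw [ENNReal.tsum_mul_left]
    exact ENNReal.mul_ne_top (by simp) hs.tsum_ofReal_ne_top)
  filter_upwards [hBC, hb1.2.2, hb2.2.2] with x hx h1 h2
  have h1' := h1.eventually_const_lt (show 1 - ε < 1 by linarith)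
  have h2' := (hm.eventually (h2.eventually_lt_const (show 1 < 1 + ε by linarith)))
  have h2'' := (hm.eventually (h2.eventually_const_lt (show (0:ℝ) < 1 by norm_num)))
  filter_upwards [hx, h1', h2', h2'', hb1.2.1.eventually_gt_atTop 0,
    hm.eventually (hb2.2.1.eventually_gt_atTop 0)] with n hn a1 a2 a3 p1 p2
  by_contra hc
  refine hn ⟨?_, ?_, hc⟩
  · rw [lt_div_iff₀ p1] at a1
    rw [ENNReal.le_ofReal_iff_toReal_le (measure_ne_top _ _) (Real.exp_pos _).le]
    refine (Real.le_exp_log _).trans (Real.exp_le_exp.2 ?_)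
    linarith
  · rw [div_lt_iff₀ p2] at a2
    rw [ENNReal.ofReal_le_iff_le_toReal (measure_ne_top _ _)]
    have hpos : 0 < (lam (cell (P2 (m n)) x)).toReal := by
      refine lt_of_le_of_ne ENNReal.toReal_nonneg fun h => ?_
      rw [← h] at a3
      simp at a3
    rw [← Real.le_log_iff_exp_le hpos]
    linarith

theorem upper_bd (lam : Measure ℝ) [IsProbabilityMeasure lam]
    (P1 P2 : ℕ → Set (Set ℝ)) (f₁ f₂ : ℕ → ℝ) (x : ℝ)
    (hf1 : Tendsto f₁ atTop atTop) (hf2 : Tendsto f₂ atTop atTop) (hmono : Monotone f₂)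
    (h1 : Tendsto (fun n => -Real.log ((lam (cell (P1 n) x)).toReal) / f₁ n) atTop (nhds 1))
    (h2 : Tendsto (fun n => -Real.log ((lam (cell (P2 n) x)).toReal) / f₂ n) atTop (nhds 1)) :
    ∀ᶠ n in atTop, ∀ ℓ, cell (P1 n) x ⊆ cell (P2 ℓ) x → f₂ ℓ ≤ 4 * f₁ n := by
  obtain ⟨N, hN⟩ := eventually_atTop.1
    ((h2.eventually_const_lt (show (1/2:ℝ) < 1 by norm_num)).and (hf2.eventually_gt_atTop 0))
  filter_upwards [h1.eventually_const_lt (show (0:ℝ) < 1 by norm_num),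
    h1.eventually_lt_const (show (1:ℝ) < 2 by norm_num), hf1.eventually_gt_atTop 0,
    hf1.eventually_ge_atTop (f₂ N)] with n a0 a1 p1 pN ℓ hℓ
  rcases le_total ℓ N with h | h
  · linarith [hmono h]
  · obtain ⟨b1, p2⟩ := hN ℓ h
    rw [lt_div_iff₀ p2] at b1
    rw [div_lt_iff₀ p1] at a1
    have hpos : 0 < (lam (cell (P1 n) x)).toReal := by
      refine lt_of_le_of_ne ENNReal.toReal_nonneg fun h => ?_
      rw [← h] at a0
      simp at a0
    have := Real.log_le_log hpos (ENNReal.toReal_mono (measure_ne_top _ _) (measure_mono hℓ))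
    linarith

/-- Proposition: liminf of the normalized Lochs index is at least 1, a.e. -/
theorem lochs_liminf_ae (lam : Measure ℝ) [IsProbabilityMeasure lam]
    (hlam : lam (Set.Icc (0 : ℝ) 1)ᶜ = 0)
    (P1 P2 : ℕ → Set (Set ℝ))
    (hP1 : ∀ n, IsTopPartition (P1 n)) (hP2 : ∀ n, IsTopPartition (P2 n))
    (f₁ f₂ : ℕ → ℝ)
    (hb1 : LogBalancedAE lam P1 f₁) (hb2 : LogBalancedAE lam P2 f₂)
    (hmono : Monotone f₂)
    (hsum : ∀ η ∈ Set.Ioo (0 : ℝ) 1, ∃ ε > (0 : ℝ),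
      Summable fun n =>
        Real.exp (-(1 - ε) * f₁ n + (1 + ε) * f₂ (weightInv f₂ ((1 - η) * f₁ n)))) :
    ∀ᵐ x ∂lam,
      1 ≤ Filter.liminf (fun n => f₂ (lochsIndex P1 P2 n x) / f₁ n) atTop := by
  have key : ∀ k : ℕ, ∀ᵐ x ∂lam, ∀ᶠ n in atTop, cell (P1 n) x ⊆
      cell (P2 (weightInv f₂ ((1 - 1 / ((k : ℝ) + 2)) * f₁ n))) x := by
    intro k
    have hk : 1 / ((k : ℝ) + 2) ∈ Set.Ioo (0 : ℝ) 1 := by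
      refine ⟨by positivity, ?_⟩
      rw [div_lt_one (by positivity)]
      have : (0 : ℝ) ≤ k := Nat.cast_nonneg k
      linarith
    obtain ⟨ε, hε, hs⟩ := hsum _ hk
    refine eventually_subset lam P1 P2 hP1 hP2 f₁ f₂ hb1 hb2 ε hε _ ?_ hs
    refine tendsto_atTop.2 fun N => ?_
    have ht : Tendsto (fun n => (1 - 1 / ((k : ℝ) + 2)) * f₁ n) atTop atTop :=
      hb1.2.1.const_mul_atTop (by linarith [hk.2])
    filter_upwards [ht.eventually_gt_atTop (f₂ N)] with n hn
    by_contra hlt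
    have := hmono (not_le.1 hlt).le
    linarith [weightInv_spec hb2.2.1 ((1 - 1 / ((k : ℝ) + 2)) * f₁ n)]
  filter_upwards [ae_all_iff.2 key, hb1.2.2, hb2.2.2] with x hx h1 h2
  have hup := upper_bd lam P1 P2 f₁ f₂ x hb1.2.1 hb2.2.1 hmono h1 h2
  have hbdd : ∀ n, (∀ ℓ, cell (P1 n) x ⊆ cell (P2 ℓ) x → f₂ ℓ ≤ 4 * f₁ n) →
      BddAbove {ℓ : ℕ | cell (P1 n) x ⊆ cell (P2 ℓ) x} := by
    intro n hn
    obtain ⟨M, hM⟩ := (hb2.2.1.eventually_gt_atTop (4 * f₁ n)).exists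
    refine ⟨M, fun ℓ hℓ => ?_⟩
    by_contra hlt
    linarith [hmono (not_le.1 hlt).le, hn ℓ hℓ]
  have hcob : IsCoboundedUnder (· ≥ ·) atTop (fun n => f₂ (lochsIndex P1 P2 n x) / f₁ n) := by
    refine IsBoundedUnder.isCoboundedUnder_ge (isBoundedUnder_of_eventually_le (a := 4) ?_)
    filter_upwards [hup, hx 0, hb1.2.1.eventually_gt_atTop 0] with n hn hs p1
    rw [div_le_iff₀ p1]
    exact hn _ (Nat.sSup_mem ⟨_, hs⟩ (hbdd n hn))
  have hlow : ∀ k : ℕ, 1 - 1 / ((k : ℝ) + 2) ≤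
      Filter.liminf (fun n => f₂ (lochsIndex P1 P2 n x) / f₁ n) atTop := by
    intro k
    refine le_liminf_of_le hcob ?_
    filter_upwards [hup, hx k, hb1.2.1.eventually_gt_atTop 0] with n hn hs p1
    rw [le_div_iff₀ p1]
    exact (weightInv_spec hb2.2.1 _).trans (hmono (le_csSup (hbdd n hn) hs))
  refine le_of_forall_pos_lt_add fun δ hδ => ?_
  obtain ⟨k, hk⟩ := exists_nat_one_div_lt hδ
  have h3 := hlow k
  have : 1 / ((k : ℝ) + 2) ≤ 1 / ((k : ℝ) + 1) := by gcongr; norm_num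
  linarith
end
end

section
/- Let f : ℕ → ℝ be a nondecreasing function with f(n) → +∞ as n → ∞. If f(n+1) − f(n) = o(f(n)) as n → ∞, then f(f^{[-1]}(y))/y → 1 as y → +∞ (over real y). -/
open MeasureTheory Filter Set Asymptotics

noncomputable section

/-- Lemma: if `f` is nondecreasing, tends to infinity and `f(n+1) - f(n) = o(f(n))`,
then `f(f^{[-1]}(y))/y → 1` as `y → +∞`. -/
theorem weightInv_comp_tendsto (f : ℕ → ℝ) (hmono : Monotone f)
    (htop : Tendsto f atTop atTop)
    (hlittle : (fun n => f (n + 1) - f n) =o[atTop] f) :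
    Tendsto (fun y : ℝ => f (weightInv f y) / y) atTop (nhds 1) := by
  rw [Metric.tendsto_nhds]
  intro ε hε
  have h1 := hlittle.def (half_pos hε)
  obtain ⟨N, hN⟩ := eventually_atTop.1 (h1.and (htop.eventually_ge_atTop 0))
  filter_upwards [eventually_gt_atTop (f N), eventually_gt_atTop (0 : ℝ)] with y hy hy0
  have hne : {n : ℕ | y ≤ f n}.Nonempty := (htop.eventually_ge_atTop y).exists
  have hw : y ≤ f (weightInv f y) := Nat.sInf_mem hne
  have hNw : N < weightInv f y := by
    by_contra hc
    have := hmono (not_lt.1 hc)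
    linarith
  obtain ⟨m, hm⟩ : ∃ m, weightInv f y = m + 1 := ⟨weightInv f y - 1, by omega⟩
  have hfm : f m < y := by
    by_contra hc
    have h2 : weightInv f y ≤ m := Nat.sInf_le (not_lt.1 hc)
    omega
  obtain ⟨h3, h4⟩ := hN m (by omega)
  rw [hm] at hw ⊢
  rw [Real.norm_eq_abs, Real.norm_eq_abs, abs_of_nonneg h4] at h3
  have h5 := (abs_le.1 h3).2
  have h6 : ε / 2 * f m ≤ ε / 2 * y := by gcongr
  have h7 : 0 < ε * y := by positivity
  rw [Real.dist_eq, abs_lt]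
  constructor
  · have : 1 ≤ f (m + 1) / y := (one_le_div hy0).2 hw
    linarith
  · have : f (m + 1) / y < 1 + ε := by
      rw [div_lt_iff₀ hy0]
      linarith
    linarith
end
end

section
/- Let λ and μ be Borel probability measures on [0,1] that are equivalent in the sense that μ has a bounded density with respect to λ and λ has a bounded density with respect to μ. If a sequence of partitions 𝒫 is log-balanced a.e. (resp. in measure) with respect to λ with weight function f, then 𝒫 is also log-balanced a.e. (resp. in measure) with respect to μ with the same weight function f. -/
open MeasureTheory Filter Set Asymptotics

noncomputable section

theorem aux_log (a b C D : ℝ) (ha : 0 ≤ a) (hb : 0 ≤ b) (h1 : b ≤ C * a) (h2 : a ≤ D * b) :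
    |Real.log a - Real.log b| ≤ |Real.log C| + |Real.log D| := by
  rcases ha.eq_or_lt with rfl | ha
  · have : b = 0 := by linarith
    subst this
    simp
    positivity
  rcases hb.eq_or_lt with rfl | hb
  · linarith
  have hC : 0 < C := by
    by_contra hc
    nlinarith
  have hD : 0 < D := by
    by_contra hc
    nlinarith
  have e1 := Real.log_le_log hb h1
  have e2 := Real.log_le_log ha h2
  rw [Real.log_mul hC.ne' ha.ne'] at e1
  rw [Real.log_mul hD.ne' hb.ne'] at e2
  have := le_abs_self (Real.log C)
  have := le_abs_self (Real.log D)
  have := abs_nonneg (Real.log C)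
  have := abs_nonneg (Real.log D)
  rw [abs_le]
  constructor <;> linarith

theorem aux_le (lam mu : Measure ℝ) (g : ℝ → ENNReal) (C : ENNReal) (hC : ∀ x, g x ≤ C)
    (h : mu = lam.withDensity g) (A : Set ℝ) : mu A ≤ C * lam A := by
  have : mu ≤ C • lam := by
    rw [h, ← withDensity_const]
    exact withDensity_mono (ae_of_all _ hC)
  simpa using this A

/-- Proposition: log-balancedness is preserved by equivalent measures
(mutually absolutely continuous with bounded densities), with the same weight function. -/
theorem logBalanced_of_equivalent (lam mu : Measure ℝ)
    [IsProbabilityMeasure lam] [IsProbabilityMeasure mu]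
    (hlam : lam (Set.Icc (0 : ℝ) 1)ᶜ = 0) (hmu : mu (Set.Icc (0 : ℝ) 1)ᶜ = 0)
    (g h : ℝ → ENNReal) (hg : Measurable g) (hh : Measurable h)
    (hgbdd : ∃ C : ENNReal, C ≠ ⊤ ∧ ∀ x, g x ≤ C)
    (hhbdd : ∃ C : ENNReal, C ≠ ⊤ ∧ ∀ x, h x ≤ C)
    (hmug : mu = lam.withDensity g) (hlamh : lam = mu.withDensity h)
    (Ps : ℕ → Set (Set ℝ)) (hPs : ∀ n, IsTopPartition (Ps n)) (f : ℕ → ℝ) :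
    (LogBalancedAE lam Ps f → LogBalancedAE mu Ps f) ∧
    (LogBalancedInMeasure lam Ps f → LogBalancedInMeasure mu Ps f) := by
  obtain ⟨C, hC, hgC⟩ := hgbdd
  obtain ⟨D, hD, hhD⟩ := hhbdd
  have h1 := aux_le lam mu g C hgC hmug
  have h2 := aux_le mu lam h D hhD hlamh
  have hnull : ∀ A, lam A = 0 → mu A = 0 := fun A hA => by
    have := h1 A
    simpa [hA] using this
  clear hmug hlamh
  obtain ⟨K, hK⟩ : ∃ K : ℝ, ∀ A : Set ℝ,
      |Real.log (lam A).toReal - Real.log (mu A).toReal| ≤ K := by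
    refine ⟨_, fun A => aux_log _ _ C.toReal D.toReal ENNReal.toReal_nonneg
      ENNReal.toReal_nonneg ?_ ?_⟩
    · rw [← ENNReal.toReal_mul]
      exact ENNReal.toReal_mono (ENNReal.mul_ne_top hC (measure_ne_top _ _)) (h1 A)
    · rw [← ENNReal.toReal_mul]
      exact ENNReal.toReal_mono (ENNReal.mul_ne_top hD (measure_ne_top _ _)) (h2 A)
  have hdist : ∀ n x, dist (-Real.log ((mu (cell (Ps n) x)).toReal) / f n)
      (-Real.log ((lam (cell (Ps n) x)).toReal) / f n) ≤ K / |f n| := by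
    intro n x
    rw [Real.dist_eq, ← sub_div, abs_div]
    gcongr
    rw [neg_sub_neg]
    exact hK (cell (Ps n) x)
  have hlim : Tendsto f atTop atTop → Tendsto (fun n => K / |f n|) atTop (nhds 0) := fun hf =>
    (tendsto_abs_atTop_atTop.comp hf).const_div_atTop K
  constructor
  · rintro ⟨hE, hf, hae⟩
    refine ⟨hnull _ hE, hf, ?_⟩
    have hae' : ∀ᵐ x ∂mu, Tendsto
        (fun n => -Real.log ((lam (cell (Ps n) x)).toReal) / f n) atTop (nhds 1) :=
      hnull _ hae
    filter_upwards [hae'] with x hx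
    refine (tendsto_iff_of_dist ?_).1 hx
    refine squeeze_zero (fun _ => dist_nonneg) (fun n => ?_) (hlim hf)
    rw [dist_comm]
    exact hdist n x
  · rintro ⟨hE, hf, hm⟩
    refine ⟨hnull _ hE, hf, ?_⟩
    rw [tendstoInMeasure_iff_dist] at hm ⊢
    intro ε hε
    have hm2 := ENNReal.Tendsto.const_mul (a := C) (hm (ε / 2) (by positivity)) (Or.inr hC)
    rw [mul_zero] at hm2
    refine tendsto_of_tendsto_of_tendsto_of_le_of_le' tendsto_const_nhds hm2
      (Eventually.of_forall fun _ => zero_le) ?_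
    filter_upwards [(hlim hf).eventually_lt_const (half_pos hε)] with n hn
    refine le_trans (measure_mono ?_) (h1 _)
    intro x hx
    simp only [mem_ofPred_eq] at hx ⊢
    have := dist_triangle (-Real.log ((mu (cell (Ps n) x)).toReal) / f n)
      (-Real.log ((lam (cell (Ps n) x)).toReal) / f n) 1
    have := hdist n x
    linarith
end
end

section
/- Let λ be a Borel probability measure on [0,1]. Every self-refining sequence of partitions 𝒫 that is log-balanced a.e. with respect to λ admits a nondecreasing function g : ℕ → ℝ that is an a.e. weight function of 𝒫 with respect to λ. -/
open MeasureTheory Filter Set Asymptotics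

noncomputable section

/-- Proposition: every self-refining a.e. log-balanced sequence of partitions admits a
nondecreasing a.e. weight function. -/
theorem exists_monotone_weight (lam : Measure ℝ) [IsProbabilityMeasure lam]
    (hlam : lam (Set.Icc (0 : ℝ) 1)ᶜ = 0)
    (Ps : ℕ → Set (Set ℝ)) (hPs : ∀ n, IsTopPartition (Ps n))
    (hself : SelfRefining Ps)
    (hb : ∃ f, LogBalancedAE lam Ps f) :
    ∃ g : ℕ → ℝ, Monotone g ∧ LogBalancedAE lam Ps g := by
  obtain ⟨f, hE, hf, hae⟩ := hb
  obtain ⟨x, hx⟩ := hae.exists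
  have hanti : Antitone (fun n => cell (Ps n) x) := by
    refine antitone_nat_of_succ_le ?_
    rintro n y ⟨I, ⟨hI, hxI⟩, hyI⟩
    obtain ⟨J, hJ, hIJ⟩ := hself n I hI
    exact ⟨J, ⟨hJ, hIJ hxI⟩, hIJ hyI⟩
  have hm : Antitone (fun n => (lam (cell (Ps n) x)).toReal) := fun m n h =>
    ENNReal.toReal_mono (measure_ne_top _ _) (measure_mono (hanti h))
  have hpos : ∀ n, 0 < (lam (cell (Ps n) x)).toReal := by
    intro n
    have h1 := hx.eventually (lt_mem_nhds (show (0 : ℝ) < 1 by norm_num))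
    obtain ⟨m, hm1, hnm⟩ := (h1.and (eventually_ge_atTop n)).exists
    refine lt_of_lt_of_le ?_ (hm hnm)
    rcases (ENNReal.toReal_nonneg (a := lam (cell (Ps m) x))).eq_or_lt with h | h
    · rw [← h] at hm1
      simp at hm1
    · exact h
  have hfpos : ∀ᶠ n in atTop, 0 < f n := hf.eventually_gt_atTop 0
  refine ⟨fun n => -Real.log ((lam (cell (Ps n) x)).toReal), ?_, hE, ?_, ?_⟩
  · intro m n h
    exact neg_le_neg (Real.log_le_log (hpos n) (hm h))
  · have := hx.pos_mul_atTop one_pos hf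
    refine this.congr' ?_
    filter_upwards [hfpos] with n hn
    exact div_mul_cancel₀ _ hn.ne'
  · filter_upwards [hae] with y hy
    have h := hy.div hx one_ne_zero
    rw [div_one] at h
    refine h.congr' ?_
    filter_upwards [hfpos] with n hn
    exact div_div_div_cancel_right₀ hn.ne' _ _
end
end

section
/- Let λ be a Borel probability measure on [0,1] and let 𝒫 = {P_n}_{n∈ℕ} be a sequence of partitions with λ(E^𝒫) = 0. If the number #(P_n) of intervals at depth n satisfies log #(P_n) = o(n) as n → ∞, then −log λ(I_n^𝒫(x))/n → 0 as n → ∞ for λ-almost every x (i.e., 𝒫 has zero entropy a.e. with respect to λ). -/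
open MeasureTheory Filter Set Asymptotics

noncomputable section

lemma aux_eps (lam : Measure ℝ) [IsProbabilityMeasure lam]
    (Ps : ℕ → Set (Set ℝ))
    (hfin : ∀ n, (Ps n).Finite)
    (hcard : (fun n => Real.log ((Ps n).ncard)) =o[atTop] (fun n => (n : ℝ)))
    (ε : ℝ) (hε : 0 < ε) :
    ∀ᵐ x ∂lam, ∀ᶠ n : ℕ in atTop, ∀ I ∈ Ps n, x ∈ I →
      ENNReal.ofReal (Real.exp (-ε * n)) < lam I := by
  let B : ℕ → Set ℝ := fun n => ⋃ I ∈ (hfin n).toFinset.filter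
    (fun I => lam I ≤ ENNReal.ofReal (Real.exp (-ε * n))), I
  have hB : ∀ n, lam (B n) ≤ ENNReal.ofReal ((Ps n).ncard * Real.exp (-ε * n)) := by
    intro n
    refine (measure_biUnion_finset_le _ _).trans ?_
    refine (Finset.sum_le_card_nsmul _ _ (ENNReal.ofReal (Real.exp (-ε * n))) ?_).trans ?_
    · intro I hI
      exact (Finset.mem_filter.1 hI).2
    · rw [nsmul_eq_mul, ENNReal.ofReal_mul (Nat.cast_nonneg _), ENNReal.ofReal_natCast]
      gcongr
      rw [Set.ncard_eq_toFinset_card _ (hfin n)]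
      exact Finset.card_filter_le _ _
  have hs : Summable (fun n : ℕ => ((Ps n).ncard : ℝ) * Real.exp (-ε * n)) := by
    have hg : Summable (fun n : ℕ => Real.exp (n * (-(ε / 2)))) :=
      Real.summable_exp_nat_mul_iff.2 (by linarith)
    refine summable_of_isBigO_nat hg (IsBigO.of_bound 1 ?_)
    filter_upwards [hcard.def (half_pos hε)] with n hn
    have h1 : ((Ps n).ncard : ℝ) ≤ Real.exp (Real.log ((Ps n).ncard)) := Real.le_exp_log _
    have h2 : Real.log ((Ps n).ncard) ≤ ε / 2 * n := by
      refine (le_abs_self _).trans ?_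
      simpa using hn
    rw [Real.norm_of_nonneg (by positivity), Real.norm_of_nonneg (by positivity), one_mul]
    calc ((Ps n).ncard : ℝ) * Real.exp (-ε * n)
        ≤ Real.exp (ε / 2 * n) * Real.exp (-ε * n) := by
          gcongr
          exact h1.trans (Real.exp_le_exp.2 h2)
      _ = Real.exp (n * (-(ε / 2))) := by
          rw [← Real.exp_add]
          congr 1
          ring
  have hsum : ∑' n, lam (B n) ≠ ⊤ :=
    ne_top_of_le_ne_top hs.tsum_ofReal_ne_top (ENNReal.tsum_le_tsum hB)
  filter_upwards [ae_eventually_notMem hsum] with x hx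
  filter_upwards [hx] with n hn I hI hxI
  by_contra hlt
  apply hn
  simp only [B, Set.mem_iUnion]
  exact ⟨I, Finset.mem_filter.2 ⟨(hfin n).mem_toFinset.2 hI, not_lt.1 hlt⟩, hxI⟩

/-- Proposition: a sequence of partitions with a sub-exponential number of intervals at
each depth has zero entropy a.e. -/
theorem zero_entropy_of_subexponential (lam : Measure ℝ) [IsProbabilityMeasure lam]
    (hlam : lam (Set.Icc (0 : ℝ) 1)ᶜ = 0)
    (Ps : ℕ → Set (Set ℝ)) (hPs : ∀ n, IsTopPartition (Ps n))
    (hE : lam (endpointSet Ps) = 0)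
    (hfin : ∀ n, (Ps n).Finite)
    (hcard : (fun n => Real.log ((Ps n).ncard)) =o[atTop] (fun n => (n : ℝ))) :
    ∀ᵐ x ∂lam,
      Tendsto (fun n => -Real.log ((lam (cell (Ps n) x)).toReal) / n) atTop (nhds 0) := by
  have h1 : ∀ᵐ x ∂lam, ∀ k : ℕ, ∀ᶠ n : ℕ in atTop, ∀ I ∈ Ps n, x ∈ I →
      ENNReal.ofReal (Real.exp (-(1 / ((k : ℝ) + 1)) * n)) < lam I :=
    ae_all_iff.2 fun k => aux_eps lam Ps hfin hcard _ (by positivity)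
  have h2 : ∀ᵐ x ∂lam, x ∉ endpointSet Ps := measure_eq_zero_iff_ae_notMem.1 hE
  have h3 : ∀ᵐ x ∂lam, x ∈ Set.Icc (0 : ℝ) 1 := hlam
  filter_upwards [h1, h2, h3] with x hx1 hx2 hx3
  rw [Metric.tendsto_atTop']
  intro ε hε
  obtain ⟨k, hk⟩ := exists_nat_one_div_lt hε
  obtain ⟨N, hN⟩ := eventually_atTop.1 (hx1 k)
  refine ⟨N, fun n hn => ?_⟩
  have hn0 : (0 : ℝ) < n := by exact_mod_cast (Nat.zero_le N).trans_lt hn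
  have hmem : x ∈ ⋃₀ Ps n := by
    by_contra h
    exact hx2 (Set.mem_iUnion.2 ⟨n, hx3, h⟩)
  obtain ⟨I, hI, hxI⟩ := hmem
  have hlt := hN n hn.le I hI hxI
  have hcell : lam I ≤ lam (cell (Ps n) x) :=
    measure_mono (Set.subset_sUnion_of_mem ⟨hI, hxI⟩)
  have hle : Real.exp (-(1 / ((k : ℝ) + 1)) * n) ≤ (lam (cell (Ps n) x)).toReal :=
    (ENNReal.ofReal_le_iff_le_toReal (measure_ne_top _ _)).1 (hlt.le.trans hcell)
  have hlog := (Real.le_log_iff_exp_le ((Real.exp_pos _).trans_le hle)).2 hle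
  have hone : (lam (cell (Ps n) x)).toReal ≤ 1 := measureReal_le_one
  have hlog0 := Real.log_nonpos ENNReal.toReal_nonneg hone
  rw [Real.dist_eq, sub_zero, abs_of_nonneg (div_nonneg (by linarith) hn0.le), div_lt_iff₀ hn0]
  nlinarith
end
end

section
/- Let f : ℕ → ℝ_{≥0} with f(n) → ∞ as n → ∞. Then there exists a sequence of partitions 𝒫 = {P_n}_{n∈ℕ} of [0,1] that is log-balanced a.e. with respect to the Lebesgue measure with weight function f. Moreover, if f is nondecreasing then 𝒫 can be chosen self-refining, and if n ↦ ⌊e^{f(n)}⌋ is strictly increasing then 𝒫 can be chosen strictly self-refining. -/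
open MeasureTheory Filter Set Asymptotics

noncomputable section

/-- Intervals cut out by a set of points. -/
def gapsOf (D : Set ℝ) : Set (Set ℝ) :=
  {I | ∃ a ∈ D, ∃ b ∈ D, a < b ∧ (∀ c ∈ D, c ≤ a ∨ b ≤ c) ∧ I = Set.Ioo a b}

/-- Dyadic points. -/
def dyPts (N : ℕ) : Set ℝ :=
  {x | x = 0 ∨ x = 1 ∨ ∃ k r : ℕ, r < 2 ^ k ∧ 2 ^ k + r < N ∧ x = (2 * r + 1 : ℝ) / 2 ^ (k + 1)}

lemma dyPts_mono {M N : ℕ} (h : M ≤ N) : dyPts M ⊆ dyPts N := by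
  rintro x (h0 | h1 | ⟨k, r, hr, hN, rfl⟩)
  · exact Or.inl h0
  · exact Or.inr (Or.inl h1)
  · exact Or.inr (Or.inr ⟨k, r, hr, by omega, rfl⟩)

lemma zero_mem_dyPts (N : ℕ) : (0 : ℝ) ∈ dyPts N := Or.inl rfl
lemma one_mem_dyPts (N : ℕ) : (1 : ℝ) ∈ dyPts N := Or.inr (Or.inl rfl)

lemma dyPts_sub (N : ℕ) : dyPts N ⊆ Set.Icc 0 1 := by
  rintro x (rfl | rfl | ⟨k, r, hr, hN, rfl⟩)
  · simp
  · simp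
  · have : (r : ℝ) + 1 ≤ 2 ^ k := by exact_mod_cast hr
    constructor
    · positivity
    · rw [div_le_one (by positivity), pow_succ]; linarith

lemma dyPts_finite (N : ℕ) : (dyPts N).Finite := by
  have h : dyPts N ⊆ ({0, 1} : Set ℝ) ∪
      (fun p : ℕ × ℕ => (2 * p.2 + 1 : ℝ) / 2 ^ (p.1 + 1)) '' (Set.Iio N ×ˢ Set.Iio N) := by
    rintro x (rfl | rfl | ⟨k, r, hr, hN, rfl⟩)
    · simp
    · simp
    · right
      have := Nat.lt_two_pow_self (n := k)
      exact ⟨(k, r), ⟨by simp; omega, by simp; omega⟩, rfl⟩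
  refine Set.Finite.subset (Set.Finite.union (by simp) (Set.Finite.image _ ?_)) h
  exact (Set.finite_Iio N).prod (Set.finite_Iio N)

lemma dy_mem (k : ℕ) : ∀ j : ℕ, j ≤ 2 ^ k → ((j : ℝ) / 2 ^ k) ∈ dyPts (2 ^ k) := by
  induction k with
  | zero =>
    intro j hj
    have : j = 0 ∨ j = 1 := by simp at hj; omega
    rcases this with rfl | rfl
    · left; simp
    · right; left; simp
  | succ k ih =>
    intro j hj
    rcases Nat.even_or_odd' j with ⟨i, rfl | rfl⟩
    · have := dyPts_mono (N := 2 ^ (k + 1)) (by rw [pow_succ]; omega) (ih i (by rw [pow_succ] at hj; omega))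
      convert this using 1
      push_cast
      rw [pow_succ]; field_simp
    · right; right
      rw [pow_succ] at hj
      exact ⟨k, i, by omega, by rw [pow_succ]; omega, by push_cast; rfl⟩

lemma dy_rep {N k : ℕ} (hN : N ≤ 2 ^ (k + 1)) {x : ℝ} (hx : x ∈ dyPts N) :
    ∃ j : ℕ, x = (j : ℝ) / 2 ^ (k + 1) := by
  rcases hx with rfl | rfl | ⟨l, r, hr, hlN, rfl⟩
  · exact ⟨0, by simp⟩
  · exact ⟨2 ^ (k + 1), by push_cast; field_simp⟩
  · have hl : l < k + 1 := by
      apply (Nat.pow_lt_pow_iff_right (a := 2) (by norm_num)).1; omega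
    obtain ⟨m, rfl⟩ : ∃ m, k = l + m := ⟨k - l, by omega⟩
    refine ⟨(2 * r + 1) * 2 ^ m, ?_⟩
    push_cast
    rw [show l + m + 1 = (l + 1) + m by ring, pow_add _ (l + 1) m]
    field_simp

lemma gap_bounds {N k : ℕ} (h1 : 2 ^ k ≤ N) (h2 : N ≤ 2 ^ (k + 1)) {a b : ℝ}
    (ha : a ∈ dyPts N) (hb : b ∈ dyPts N) (hab : a < b) (hc : ∀ c ∈ dyPts N, c ≤ a ∨ b ≤ c) :
    1 / (2 : ℝ) ^ (k + 1) ≤ b - a ∧ b - a ≤ 1 / 2 ^ k := by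
  constructor
  · obtain ⟨i, rfl⟩ := dy_rep h2 ha
    obtain ⟨j, rfl⟩ := dy_rep h2 hb
    rw [div_lt_div_iff_of_pos_right (by positivity)] at hab
    rw [← sub_div, div_le_div_iff_of_pos_right (by positivity)]
    have : (i : ℝ) + 1 ≤ j := by exact_mod_cast hab
    linarith
  · have ha0 := (dyPts_sub N ha).1
    have hb1 := (dyPts_sub N hb).2
    have hp : (0 : ℝ) < 2 ^ k := by positivity
    have e1 := Nat.floor_le (a := a * 2 ^ k) (by positivity)
    have e2 := Nat.lt_floor_add_one (a * 2 ^ k)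
    set j := ⌊a * 2 ^ k⌋₊
    have hj : j + 1 ≤ 2 ^ k := by
      have : (j : ℝ) < 2 ^ k := by nlinarith
      exact_mod_cast this
    have hm := dyPts_mono h1 (dy_mem k (j + 1) hj)
    push_cast at hm
    have hlt : a < ((j : ℝ) + 1) / 2 ^ k := by rwa [lt_div_iff₀ hp]
    have hle : b ≤ ((j : ℝ) + 1) / 2 ^ k := by
      rcases hc _ hm with h | h
      · linarith
      · exact h
    have : (j : ℝ) / 2 ^ k ≤ a := by rwa [div_le_iff₀ hp]
    rw [add_div] at hle
    linarith

lemma dy_new {N : ℕ} (hN : 1 ≤ N) : ∃ p ∈ dyPts (N + 1), p ∉ dyPts N := by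
  have h1 := Nat.pow_log_le_self 2 (x := N) (by omega)
  have h2 := Nat.lt_pow_succ_log_self (b := 2) (by norm_num) N
  set k := Nat.log 2 N
  obtain ⟨r, hr⟩ : ∃ r, N = 2 ^ k + r := ⟨N - 2 ^ k, by omega⟩
  rw [pow_succ] at h2
  have hrk : r < 2 ^ k := by omega
  refine ⟨(2 * r + 1 : ℝ) / 2 ^ (k + 1), Or.inr (Or.inr ⟨k, r, hrk, by omega, rfl⟩), ?_⟩
  have hr' : (r : ℝ) + 1 ≤ 2 ^ k := by exact_mod_cast hrk
  rintro (h | h | ⟨l, s, hs, hlN, h⟩)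
  · have : (0 : ℝ) < (2 * r + 1 : ℝ) / 2 ^ (k + 1) := by positivity
    linarith
  · rw [div_eq_one_iff_eq (by positivity), pow_succ] at h
    linarith
  · rw [div_eq_div_iff (by positivity) (by positivity), pow_succ, pow_succ] at h
    have h' : (2 * r + 1) * 2 ^ l = (2 * s + 1) * 2 ^ k := by
      have : ((2 * r + 1) * 2 ^ l : ℝ) = (2 * s + 1) * 2 ^ k := by linarith
      exact_mod_cast this
    rcases lt_trichotomy l k with hlk | hlk | hlk
    · obtain ⟨m, hm⟩ : ∃ m, k = l + (m + 1) := ⟨k - l - 1, by omega⟩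
      have h3 : (2 * r + 1) * 2 ^ l = (2 * ((2 * s + 1) * 2 ^ m)) * 2 ^ l := by
        rw [h', hm, pow_add, pow_succ]; ring
      have := Nat.eq_of_mul_eq_mul_right (by positivity) h3
      omega
    · rw [hlk] at h' hlN
      have := Nat.eq_of_mul_eq_mul_right (by positivity) h'
      omega
    · have := Nat.pow_lt_pow_right (a := 2) (by norm_num) hlk
      have h5 : 2 ^ (k + 1) ≤ 2 ^ l := Nat.pow_le_pow_right (by norm_num) hlk
      rw [pow_succ] at h5
      omega

section gaps
variable {D : Set ℝ}

lemma gap_exists (hfin : D.Finite) (h0 : (0 : ℝ) ∈ D) (h1 : (1 : ℝ) ∈ D) {x : ℝ}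
    (hx0 : 0 ≤ x) (hx1 : x < 1) :
    ∃ a ∈ D, ∃ b ∈ D, a ≤ x ∧ x < b ∧ (∀ c ∈ D, c ≤ a ∨ b ≤ c) := by
  obtain ⟨a, ⟨haD, hax⟩, ha⟩ := Set.exists_max_image (D ∩ Set.Iic x) id (hfin.inter_of_left _)
    ⟨0, h0, hx0⟩
  obtain ⟨b, ⟨hbD, hbx⟩, hb⟩ := Set.exists_min_image (D ∩ Set.Ioi x) id (hfin.inter_of_left _)
    ⟨1, h1, hx1⟩
  refine ⟨a, haD, b, hbD, hax, hbx, fun c hc => ?_⟩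
  rcases le_or_gt c x with h | h
  · exact Or.inl (ha c ⟨hc, h⟩)
  · exact Or.inr (hb c ⟨hc, h⟩)

lemma gap_exists_one (hfin : D.Finite) (h0 : (0 : ℝ) ∈ D) (h1 : (1 : ℝ) ∈ D)
    (hsub : D ⊆ Set.Icc 0 1) :
    ∃ a ∈ D, a < 1 ∧ (∀ c ∈ D, c ≤ a ∨ 1 ≤ c) := by
  obtain ⟨a, ⟨haD, hax⟩, ha⟩ := Set.exists_max_image (D ∩ Set.Iio 1) id (hfin.inter_of_left _)
    ⟨0, h0, by simp⟩
  refine ⟨a, haD, hax, fun c hc => ?_⟩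
  rcases lt_or_ge c 1 with h | h
  · exact Or.inl (ha c ⟨hc, h⟩)
  · exact Or.inr h

lemma gap_cover (hfin : D.Finite) (h0 : (0 : ℝ) ∈ D) (h1 : (1 : ℝ) ∈ D) {x : ℝ}
    (hx : x ∈ Set.Icc (0 : ℝ) 1) (hxD : x ∉ D) :
    ∃ a ∈ D, ∃ b ∈ D, a < x ∧ x < b ∧ (∀ c ∈ D, c ≤ a ∨ b ≤ c) := by
  have hx1 : x < 1 := lt_of_le_of_ne hx.2 (by rintro rfl; exact hxD h1)
  obtain ⟨a, ha, b, hb, hax, hxb, hc⟩ := gap_exists hfin h0 h1 hx.1 hx1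
  exact ⟨a, ha, b, hb, lt_of_le_of_ne hax (by rintro rfl; exact hxD ha), hxb, hc⟩

lemma gap_unique {a b a' b' x : ℝ} (ha : a ∈ D) (hb : b ∈ D) (hc : ∀ c ∈ D, c ≤ a ∨ b ≤ c)
    (ha' : a' ∈ D) (hb' : b' ∈ D) (hc' : ∀ c ∈ D, c ≤ a' ∨ b' ≤ c)
    (hx : x ∈ Set.Ioo a b) (hx' : x ∈ Set.Ioo a' b') : a = a' ∧ b = b' := by
  obtain ⟨h1, h2⟩ := hx
  obtain ⟨h3, h4⟩ := hx'
  constructor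
  · rcases hc a' ha' with h | h <;> rcases hc' a ha with h' | h' <;> linarith
  · rcases hc b' hb' with h | h <;> rcases hc' b hb with h' | h' <;> linarith

lemma gaps_partition (hfin : D.Finite) (h0 : (0 : ℝ) ∈ D) (h1 : (1 : ℝ) ∈ D)
    (hsub : D ⊆ Set.Icc 0 1) : IsTopPartition (gapsOf D) := by
  refine ⟨?_, ?_, ?_, ?_⟩
  · refine Set.Countable.mono ?_ (((hfin.prod hfin).image
      (fun p : ℝ × ℝ => Set.Ioo p.1 p.2)).countable)
    rintro I ⟨a, ha, b, hb, -, -, rfl⟩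
    exact ⟨(a, b), ⟨ha, hb⟩, rfl⟩
  · rintro I ⟨a, ha, b, hb, hab, -, rfl⟩
    exact ⟨a, b, hab, (hsub ha).1, (hsub hb).2, rfl⟩
  · rintro I ⟨a, ha, b, hb, hab, hc, rfl⟩ J ⟨a', ha', b', hb', hab', hc', rfl⟩ hne
    rw [Function.onFun, Set.disjoint_left]
    intro x hx hx'
    obtain ⟨rfl, rfl⟩ := gap_unique ha hb hc ha' hb' hc' hx hx'
    exact hne rfl
  · apply Set.Subset.antisymm
    · refine Set.iUnion₂_subset ?_
      rintro I ⟨a, ha, b, hb, hab, -, rfl⟩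
      rw [closure_Ioo hab.ne]
      exact Set.Icc_subset_Icc (hsub ha).1 (hsub hb).2
    · intro x hx
      rw [Set.mem_iUnion₂]
      rcases lt_or_eq_of_le hx.2 with h | rfl
      · obtain ⟨a, ha, b, hb, hax, hxb, hc⟩ := gap_exists hfin h0 h1 hx.1 h
        have hab : a < b := lt_of_le_of_lt hax hxb
        refine ⟨_, ⟨a, ha, b, hb, hab, hc, rfl⟩, ?_⟩
        rw [closure_Ioo hab.ne]
        exact ⟨hax, hxb.le⟩
      · obtain ⟨a, ha, hab, hc⟩ := gap_exists_one hfin h0 h1 hsub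
        refine ⟨_, ⟨a, ha, 1, h1, hab, hc, rfl⟩, ?_⟩
        rw [closure_Ioo hab.ne]
        exact ⟨hab.le, le_rfl⟩

lemma gaps_diff (hfin : D.Finite) (h0 : (0 : ℝ) ∈ D) (h1 : (1 : ℝ) ∈ D)
    (hsub : D ⊆ Set.Icc 0 1) : Set.Icc (0 : ℝ) 1 \ ⋃₀ gapsOf D = D := by
  ext x
  constructor
  · rintro ⟨hx, hn⟩
    by_contra hxD
    obtain ⟨a, ha, b, hb, hax, hxb, hc⟩ := gap_cover hfin h0 h1 hx hxD
    exact hn ⟨_, ⟨a, ha, b, hb, hax.trans hxb, hc, rfl⟩, hax, hxb⟩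
  · intro hx
    refine ⟨hsub hx, ?_⟩
    rintro ⟨I, ⟨a, ha, b, hb, hab, hc, rfl⟩, h3, h4⟩
    rcases hc x hx with h | h <;> linarith

lemma cell_gaps {a b x : ℝ} (ha : a ∈ D) (hb : b ∈ D) (hc : ∀ c ∈ D, c ≤ a ∨ b ≤ c)
    (hx : x ∈ Set.Ioo a b) : cell (gapsOf D) x = Set.Ioo a b := by
  unfold cell
  apply Set.Subset.antisymm
  · refine Set.sUnion_subset ?_
    rintro I ⟨⟨a', ha', b', hb', hab', hc', rfl⟩, hx'⟩
    obtain ⟨rfl, rfl⟩ := gap_unique ha hb hc ha' hb' hc' hx hx'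
    exact le_rfl
  · exact Set.subset_sUnion_of_mem ⟨⟨a, ha, b, hb, hx.1.trans hx.2, hc, rfl⟩, hx⟩

lemma gaps_refine (hfin : D.Finite) (h0 : (0 : ℝ) ∈ D) (h1 : (1 : ℝ) ∈ D)
    {D' : Set ℝ} (hsub' : D' ⊆ Set.Icc 0 1) (hDD : D ⊆ D') :
    ∀ I ∈ gapsOf D', ∃ J ∈ gapsOf D, I ⊆ J := by
  rintro I ⟨a, ha, b, hb, hab, hc, rfl⟩
  have hm0 : 0 ≤ a := (hsub' ha).1
  have hm1 : b ≤ 1 := (hsub' hb).2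
  obtain ⟨a', ha', b', hb', hax, hxb, hc'⟩ :=
    gap_exists hfin h0 h1 (x := (a + b) / 2) (by linarith) (by linarith)
  refine ⟨_, ⟨a', ha', b', hb', by linarith, hc', rfl⟩, ?_⟩
  apply Set.Ioo_subset_Ioo
  · rcases hc a' (hDD ha') with h | h <;> linarith
  · rcases hc b' (hDD hb') with h | h <;> linarith

end gaps

lemma log_close {y : ℝ} (hy : 0 ≤ y) {a b : ℝ}
    (ha : a ∈ dyPts ⌊Real.exp y⌋₊) (hb : b ∈ dyPts ⌊Real.exp y⌋₊) (hab : a < b)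
    (hc : ∀ c ∈ dyPts ⌊Real.exp y⌋₊, c ≤ a ∨ b ≤ c) :
    |-Real.log (b - a) - y| ≤ Real.log 2 := by
  have hN1 : 1 ≤ ⌊Real.exp y⌋₊ := Nat.le_floor (by simpa using hy)
  have e1 := Nat.floor_le (Real.exp_pos y).le
  have e2 := Nat.lt_floor_add_one (Real.exp y)
  set N := ⌊Real.exp y⌋₊
  have h1 := Nat.pow_log_le_self 2 (x := N) (by omega)
  have h2 := Nat.lt_pow_succ_log_self (b := 2) (by norm_num) N
  set k := Nat.log 2 N
  obtain ⟨g1, g2⟩ := gap_bounds h1 h2.le ha hb hab hc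
  have h1' : (2 : ℝ) ^ k ≤ N := by exact_mod_cast h1
  have h2' : (N : ℝ) + 1 ≤ 2 ^ (k + 1) := by exact_mod_cast h2
  have f1 : k * Real.log 2 ≤ y := by
    have := Real.log_le_log (by positivity) (h1'.trans e1)
    rwa [Real.log_pow, Real.log_exp] at this
  have f2 : y ≤ (k + 1) * Real.log 2 := by
    have := Real.log_le_log (Real.exp_pos y) (e2.le.trans h2')
    rw [Real.log_pow, Real.log_exp] at this
    exact_mod_cast this
  have f3 : -Real.log (b - a) ≤ (k + 1) * Real.log 2 := by
    have := Real.log_le_log (by positivity) g1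
    rw [one_div, Real.log_inv, Real.log_pow] at this
    push_cast at this
    linarith
  have f4 : k * Real.log 2 ≤ -Real.log (b - a) := by
    have := Real.log_le_log (by linarith) g2
    rw [one_div, Real.log_inv, Real.log_pow] at this
    linarith
  rw [abs_le]
  constructor <;> linarith

/-- Proposition: realization of any prescribed weight function tending to infinity by an
a.e. log-balanced sequence of partitions (with respect to Lebesgue measure on `[0,1]`). -/
theorem realization (f : ℕ → ℝ) (hf0 : ∀ n, 0 ≤ f n)
    (htop : Tendsto f atTop atTop) :
    ∃ Ps : ℕ → Set (Set ℝ),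
      (∀ n, IsTopPartition (Ps n)) ∧
      LogBalancedAE (volume.restrict (Set.Icc (0 : ℝ) 1)) Ps f ∧
      (Monotone f → SelfRefining Ps) ∧
      (StrictMono (fun n => ⌊Real.exp (f n)⌋₊) → StrictSelfRefining Ps) := by
  set D : ℕ → Set ℝ := fun n => dyPts ⌊Real.exp (f n)⌋₊ with hD
  have hfin : ∀ n, (D n).Finite := fun n => dyPts_finite _
  have h0 : ∀ n, (0 : ℝ) ∈ D n := fun n => zero_mem_dyPts _
  have h1 : ∀ n, (1 : ℝ) ∈ D n := fun n => one_mem_dyPts _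
  have hsub : ∀ n, D n ⊆ Set.Icc 0 1 := fun n => dyPts_sub _
  have hend : endpointSet (fun n => gapsOf (D n)) = ⋃ n, D n := by
    unfold endpointSet
    exact Set.iUnion_congr fun n => gaps_diff (hfin n) (h0 n) (h1 n) (hsub n)
  have hcount : (⋃ n, D n).Countable := Set.countable_iUnion fun n => (hfin n).countable
  have hself : Monotone (fun n => ⌊Real.exp (f n)⌋₊) → SelfRefining (fun n => gapsOf (D n)) := by
    intro hm n
    exact gaps_refine (hfin n) (h0 n) (h1 n) (hsub (n + 1)) (dyPts_mono (hm (Nat.le_succ n)))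
  refine ⟨fun n => gapsOf (D n), fun n => gaps_partition (hfin n) (h0 n) (h1 n) (hsub n),
    ⟨?_, htop, ?_⟩, ?_, ?_⟩
  · rw [hend]
    exact hcount.measure_zero _
  · have hae : ∀ᵐ x ∂(volume.restrict (Set.Icc (0 : ℝ) 1)), x ∉ ⋃ n, D n :=
      hcount.ae_notMem _
    filter_upwards [hae, ae_restrict_mem measurableSet_Icc] with x hx hxI
    have hbd : ∀ n, |-Real.log (((volume.restrict (Set.Icc (0 : ℝ) 1))
        (cell (gapsOf (D n)) x)).toReal) - f n| ≤ Real.log 2 := by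
      intro n
      have hxn : x ∉ D n := fun h => hx (Set.mem_iUnion.2 ⟨n, h⟩)
      obtain ⟨a, ha, b, hb, hax, hxb, hc⟩ := gap_cover (hfin n) (h0 n) (h1 n) hxI hxn
      have hab := hax.trans hxb
      rw [cell_gaps ha hb hc ⟨hax, hxb⟩, Measure.restrict_apply measurableSet_Ioo,
        Set.inter_eq_left.2 (Set.Ioo_subset_Icc_self.trans
          (Set.Icc_subset_Icc (hsub n ha).1 (hsub n hb).2)), Real.volume_Ioo,
        ENNReal.toReal_ofReal (by linarith)]
      exact log_close (hf0 n) ha hb hab hc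
    rw [tendsto_iff_norm_sub_tendsto_zero]
    refine squeeze_zero' (Eventually.of_forall fun n => norm_nonneg _) ?_
      (Tendsto.const_div_atTop htop (Real.log 2))
    filter_upwards [htop.eventually_gt_atTop 0] with n hn
    rw [Real.norm_eq_abs, div_sub_one hn.ne', abs_div, abs_of_pos hn]
    exact div_le_div_of_nonneg_right (hbd n) hn.le
  · intro hm
    exact hself fun i j hij => Nat.floor_mono (Real.exp_le_exp.2 (hm hij))
  · intro hs
    refine ⟨hself hs.monotone, fun n heq => ?_⟩
    have hDeq : D (n + 1) = D n := by
      rw [← gaps_diff (hfin n) (h0 n) (h1 n) (hsub n),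
        ← gaps_diff (hfin (n+1)) (h0 (n+1)) (h1 (n+1)) (hsub (n+1))]
      exact congrArg (fun P => Set.Icc (0 : ℝ) 1 \ ⋃₀ P) heq
    obtain ⟨p, hp, hp'⟩ := dy_new (N := ⌊Real.exp (f n)⌋₊)
      (Nat.le_floor (by simpa using hf0 n))
    apply hp'
    change p ∈ D n
    rw [← hDeq]
    exact dyPts_mono (Nat.succ_le_of_lt (hs (Nat.lt_succ_self n))) hp
end
end

section
/- For Lebesgue-almost every x ∈ [0,1], −log |I_n^ℱ(x)| / (2 log n) → 1 as n → ∞, where |·| denotes Lebesgue measure (length); that is, the Farey sequence of partitions ℱ is a.e. log-balanced with respect to the Lebesgue measure with weight function f_ℱ(n) = 2 log n (for n ≥ 1). -/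
open MeasureTheory Filter Set

noncomputable section

/-- The set `E_n^ℱ` of endpoints of the Farey partition `F_n`: rationals of `[0,1]` whose
denominator in lowest terms is at most `n+1`. -/
def fareyPts (n : ℕ) : Set ℝ :=
  {x | ∃ p q : ℕ, q ≠ 0 ∧ q ≤ n + 1 ∧ p ≤ q ∧ Nat.gcd p q = 1 ∧ x = (p : ℝ) / q}

/-- The interval `I_n^ℱ(x)` of the Farey partition `F_n` containing `x`: the open interval
between the largest Farey point of order `n+1` below `x` and the smallest one above `x`. -/
def fareyInterval (n : ℕ) (x : ℝ) : Set ℝ :=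
  Set.Ioo (sSup (fareyPts n ∩ Set.Iio x)) (sInf (fareyPts n ∩ Set.Ioi x))

/-- The partial quotient `a_{m+1}` of the continued fraction expansion of `x ∈ (0,1)`,
obtained from the Gauss map: `cfa x m = ⌊1 / T_G^m x⌋` where `T_G y = {1/y}`. -/
def cfa (x : ℝ) (m : ℕ) : ℕ := ⌊1 / ((fun y => Int.fract (1 / y))^[m] x)⌋₊

/-- Numerators of the convergents of `x`, shifted by one: `cfp x (m+1) = p_m`, with
`p_{-1} = 1`, `p_0 = 0`, `p_{m+1} = a_{m+1} p_m + p_{m-1}`. -/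
def cfp (x : ℝ) : ℕ → ℕ
  | 0 => 1
  | 1 => 0
  | m + 2 => cfa x m * cfp x (m + 1) + cfp x m

/-- Denominators of the convergents of `x`, shifted by one: `cfq x (m+1) = q_m`, with
`q_{-1} = 0`, `q_0 = 1`, `q_{m+1} = a_{m+1} q_m + q_{m-1}`. -/
def cfq (x : ℝ) : ℕ → ℕ
  | 0 => 0
  | 1 => 1
  | m + 2 => cfa x m * cfq x (m + 1) + cfq x m

/-- The fundamental interval `I_n^{𝒞ℱ}(x)` of depth `n` of the continued fraction
expansion: the open interval with endpoints `p_n/q_n` and `(p_n+p_{n-1})/(q_n+q_{n-1})`,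
the former being the left endpoint iff `n` is even. -/
def cfInterval (x : ℝ) (n : ℕ) : Set ℝ :=
  if Even n then
    Set.Ioo ((cfp x (n + 1) : ℝ) / (cfq x (n + 1) : ℝ))
      (((cfp x (n + 1) + cfp x n : ℕ) : ℝ) / ((cfq x (n + 1) + cfq x n : ℕ) : ℝ))
  else
    Set.Ioo (((cfp x (n + 1) + cfp x n : ℕ) : ℝ) / ((cfq x (n + 1) + cfq x n : ℕ) : ℝ))
      ((cfp x (n + 1) : ℝ) / (cfq x (n + 1) : ℝ))

/-- The Lochs index `L_n(x, 𝒞ℱ, ℱ)` from the continued fraction sequence of partitions to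
the Farey sequence of partitions. -/
def lochsCFtoF (x : ℝ) (n : ℕ) : ℕ :=
  sSup {ℓ : ℕ | cfInterval x n ⊆ fareyInterval ℓ x}

/-- The Lochs index `L_n(x, ℱ, 𝒞ℱ)` from the Farey sequence of partitions to the
continued fraction sequence of partitions. -/
def lochsFtoCF (x : ℝ) (n : ℕ) : ℕ :=
  sSup {ℓ : ℕ | fareyInterval n x ⊆ cfInterval x ℓ}

lemma farey_pair (x : ℝ) (hx : Irrational x) (h0 : 0 < x) (h1 : x < 1) (n : ℕ) :
    ∃ p1 q1 p2 q2 : ℕ, 0 < q1 ∧ 0 < q2 ∧ q1 ≤ n + 1 ∧ q2 ≤ n + 1 ∧ n + 1 < q1 + q2 ∧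
      p1 ≤ q1 ∧ p2 ≤ q2 ∧ p2 * q1 = p1 * q2 + 1 ∧
      (p1 : ℝ) / q1 < x ∧ x < (p2 : ℝ) / q2 := by
  induction n with
  | zero => exact ⟨0, 1, 1, 1, by simp [h0, h1]⟩
  | succ n ih =>
    obtain ⟨p1, q1, p2, q2, a1, a2, a3, a4, a5, a6, a7, a8, a9, a10⟩ := ih
    by_cases h : n + 1 + 1 < q1 + q2
    · exact ⟨p1, q1, p2, q2, a1, a2, by omega, by omega, h, a6, a7, a8, a9, a10⟩
    · have hne : x ≠ ((p1 + p2 : ℕ) : ℝ) / ((q1 + q2 : ℕ) : ℝ) := by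
        have := hx.ne_rat (((p1 + p2 : ℕ) : ℚ) / ((q1 + q2 : ℕ) : ℚ))
        push_cast at this ⊢
        exact this
      rcases lt_or_gt_of_ne hne with h' | h'
      · exact ⟨p1, q1, p1 + p2, q1 + q2, a1, by omega, by omega, by omega, by omega, a6,
          by omega, by nlinarith, a9, h'⟩
      · exact ⟨p1 + p2, q1 + q2, p2, q2, by omega, a2, by omega, by omega, by omega, by omega,
          a7, by nlinarith, h', a10⟩

lemma farey_gap (a b p1 q1 p2 q2 : ℕ) (hd : p2 * q1 = p1 * q2 + 1)
    (h1 : p1 * b < a * q1) (h2 : a * q2 < p2 * b) : q1 + q2 ≤ b := by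
  zify at *
  have e : (b : ℤ) = q1 * (p2 * b - a * q2) + q2 * (a * q1 - p1 * b) := by
    linear_combination -(b : ℤ) * hd
  have h3 : (1 : ℤ) ≤ p2 * b - a * q2 := by omega
  have h4 : (1 : ℤ) ≤ a * q1 - p1 * b := by omega
  nlinarith [mul_le_mul_of_nonneg_left h3 (Int.natCast_nonneg q1),
    mul_le_mul_of_nonneg_left h4 (Int.natCast_nonneg q2)]

lemma farey_vol (x : ℝ) (n p1 q1 p2 q2 : ℕ) (a1 : 0 < q1) (a2 : 0 < q2) (a3 : q1 ≤ n + 1)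
    (a4 : q2 ≤ n + 1) (a5 : n + 1 < q1 + q2) (a6 : p1 ≤ q1) (a7 : p2 ≤ q2)
    (a8 : p2 * q1 = p1 * q2 + 1) (a9 : (p1 : ℝ) / q1 < x) (a10 : x < (p2 : ℝ) / q2) :
    (volume (fareyInterval n x)).toReal = 1 / ((q1 : ℝ) * q2) := by
  have r1 : (0 : ℝ) < q1 := by exact_mod_cast a1
  have r2 : (0 : ℝ) < q2 := by exact_mod_cast a2
  have c1 : Nat.gcd p1 q1 = 1 := by
    have hl : Nat.gcd p1 q1 ∣ p1 * q2 + 1 := a8 ▸ (Nat.gcd_dvd_right p1 q1).mul_left p2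
    exact Nat.dvd_one.1 ((Nat.dvd_add_right ((Nat.gcd_dvd_left p1 q1).mul_right q2)).1 hl)
  have c2 : Nat.gcd p2 q2 = 1 := by
    have hl : Nat.gcd p2 q2 ∣ p1 * q2 + 1 := a8 ▸ (Nat.gcd_dvd_left p2 q2).mul_right q1
    exact Nat.dvd_one.1 ((Nat.dvd_add_right ((Nat.gcd_dvd_right p2 q2).mul_left p1)).1 hl)
  have key : ∀ a b : ℕ, b ≠ 0 → b ≤ n + 1 → (p1 : ℝ) / q1 < (a : ℝ) / b →
      (a : ℝ) / b < (p2 : ℝ) / q2 → False := by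
    intro a b hb hbn h1 h2
    have rb : (0 : ℝ) < b := by exact_mod_cast Nat.pos_of_ne_zero hb
    rw [div_lt_div_iff₀ r1 rb] at h1
    rw [div_lt_div_iff₀ rb r2] at h2
    have := farey_gap a b p1 q1 p2 q2 a8 (by exact_mod_cast h1) (by exact_mod_cast h2)
    omega
  have hs : IsGreatest (fareyPts n ∩ Set.Iio x) ((p1 : ℝ) / q1) := by
    refine ⟨⟨⟨p1, q1, a1.ne', a3, a6, c1, rfl⟩, a9⟩, ?_⟩
    rintro y ⟨⟨a, b, hb, hbn, -, -, rfl⟩, hy⟩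
    by_contra! hc
    exact key a b hb hbn hc (lt_trans hy a10)
  have hi : IsLeast (fareyPts n ∩ Set.Ioi x) ((p2 : ℝ) / q2) := by
    refine ⟨⟨⟨p2, q2, a2.ne', a4, a7, c2, rfl⟩, a10⟩, ?_⟩
    rintro y ⟨⟨a, b, hb, hbn, -, -, rfl⟩, hy⟩
    by_contra! hc
    exact key a b hb hbn (lt_trans a9 hy) hc
  have hd : (p2 : ℝ) * q1 = p1 * q2 + 1 := by exact_mod_cast a8
  have e : (p2 : ℝ) / q2 - (p1 : ℝ) / q1 = 1 / ((q1 : ℝ) * q2) := by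
    field_simp
    linarith
  rw [fareyInterval, hs.csSup_eq, hi.csInf_eq, Real.volume_Ioo, e, ENNReal.toReal_ofReal]
  positivity

lemma farey_dioph (x : ℝ) (hx : Irrational x) (p : ℝ) (h : ¬ LiouvilleWith p x) :
    ∃ c : ℝ, 0 < c ∧ ∀ (k : ℕ) (m : ℤ), 0 < k → c ≤ |x - m / k| * (k : ℝ) ^ p := by
  have h1 : ∀ᶠ k : ℕ in atTop, ∀ m : ℤ, 1 ≤ |x - m / k| * (k : ℝ) ^ p := by
    have h2 : ¬ ∃ᶠ k : ℕ in atTop, ∃ m : ℤ, x ≠ m / k ∧ |x - m / k| < 1 / (k : ℝ) ^ p :=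
      fun h3 => h ⟨1, h3⟩
    rw [not_frequently] at h2
    filter_upwards [h2, eventually_gt_atTop 0] with k hk hk0 m
    push Not at hk
    have hne : x ≠ m / k := by
      have := hx.ne_rat ((m : ℚ) / (k : ℚ))
      push_cast at this
      exact this
    have := hk m hne
    rwa [div_le_iff₀ (by positivity)] at this
  obtain ⟨B, hB⟩ := eventually_atTop.1 h1
  have h3 : ∀ B : ℕ, ∃ c : ℝ, 0 < c ∧
      ∀ (k : ℕ) (m : ℤ), 0 < k → k < B → c ≤ |x - m / k| * (k : ℝ) ^ p := by
    intro B
    induction B with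
    | zero => exact ⟨1, one_pos, by simp⟩
    | succ B ih =>
      obtain ⟨c, hc, hc'⟩ := ih
      have := (hx.eventually_forall_le_dist_cast_div B)
      obtain ⟨ε, hε, hε0⟩ := ((this.filter_mono nhdsWithin_le_nhds).and
        (self_mem_nhdsWithin : Set.Ioi (0 : ℝ) ∈ nhdsWithin 0 (Set.Ioi 0))).exists
      by_cases hB0 : B = 0
      · exact ⟨1, one_pos, fun k m h1 h2 => by omega⟩
      have hB1 : (0 : ℝ) < B := by exact_mod_cast Nat.pos_of_ne_zero hB0
      have hε1 : (0 : ℝ) < ε := hε0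
      refine ⟨min c (ε * (B : ℝ) ^ p), lt_min hc (by positivity), fun k m hk hkB => ?_⟩
      rcases Nat.lt_succ_iff_lt_or_eq.1 hkB with h4 | rfl
      · exact (min_le_left _ _).trans (hc' k m hk h4)
      · refine (min_le_right _ _).trans ?_
        gcongr
        exact hε m
  obtain ⟨c, hc, hc'⟩ := h3 B
  refine ⟨min c 1, lt_min hc one_pos, fun k m hk => ?_⟩
  rcases lt_or_ge k B with h4 | h4
  · exact (min_le_left _ _).trans (hc' k m hk h4)
  · exact (min_le_right _ _).trans (hB k h4 m)

/-- Core estimate: smaller denominator `m`, larger `M`. -/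
lemma farey_est (c δ : ℝ) (hc : 0 < c) (hδ : 0 < δ) (hδ1 : δ ≤ 1) (n m M : ℕ) (hm : 0 < m)
    (hM : m ≤ M) (hn : n < m + M) (hn0 : 0 < n) (d : ℝ) (h : c ≤ d * (m : ℝ) ^ (2 + δ))
    (hd : d ≤ 1 / ((m : ℝ) * M)) :
    (2 - δ) * (Real.log n - Real.log 2) - |Real.log c| ≤ Real.log m + Real.log M := by
  have rm : (0 : ℝ) < m := by exact_mod_cast hm
  have rM : (0 : ℝ) < M := by exact_mod_cast (lt_of_lt_of_le hm hM)
  have rn : (0 : ℝ) < n := by exact_mod_cast hn0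
  have h1 : c ≤ 1 / ((m : ℝ) * M) * (m : ℝ) ^ (2 + δ) := h.trans (by gcongr)
  have h2 := Real.log_le_log hc h1
  rw [Real.log_mul (by positivity) (by positivity), Real.log_rpow rm, one_div, Real.log_inv,
    Real.log_mul rm.ne' rM.ne'] at h2
  have h3 : Real.log n ≤ Real.log 2 + Real.log M := by
    rw [← Real.log_mul two_ne_zero rM.ne']
    apply Real.log_le_log rn
    have : n ≤ 2 * M := by omega
    exact_mod_cast this
  have h4 : 0 ≤ Real.log M := Real.log_nonneg (by exact_mod_cast (by omega : 1 ≤ M))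
  have h5 : -|Real.log c| ≤ Real.log c := neg_abs_le _
  have h6 : 0 ≤ |Real.log c| := abs_nonneg _
  have h7 : (1 - δ) * Real.log M - |Real.log c| ≤ Real.log m := by
    have : (1 + δ) * ((1 - δ) * Real.log M - |Real.log c|) ≤ (1 + δ) * Real.log m := by
      nlinarith [mul_nonneg (mul_nonneg hδ.le hδ.le) h4, mul_nonneg hδ.le h6]
    exact le_of_mul_le_mul_left this (by linarith)
  nlinarith [mul_le_mul_of_nonneg_left h3 (by linarith : 0 ≤ 2 - δ)]

lemma farey_upper (x : ℝ) (hx : Irrational x) (h0 : 0 < x) (h1 : x < 1) (n : ℕ) :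
    -Real.log ((volume (fareyInterval n x)).toReal) ≤ 2 * Real.log (n + 1) := by
  obtain ⟨p1, q1, p2, q2, a1, a2, a3, a4, a5, a6, a7, a8, a9, a10⟩ := farey_pair x hx h0 h1 n
  rw [farey_vol x n p1 q1 p2 q2 a1 a2 a3 a4 a5 a6 a7 a8 a9 a10]
  have r1 : (0 : ℝ) < q1 := by exact_mod_cast a1
  have r2 : (0 : ℝ) < q2 := by exact_mod_cast a2
  rw [one_div, Real.log_inv, neg_neg, Real.log_mul r1.ne' r2.ne']
  have := Real.log_le_log r1 (by exact_mod_cast a3 : (q1 : ℝ) ≤ n + 1)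
  have := Real.log_le_log r2 (by exact_mod_cast a4 : (q2 : ℝ) ≤ n + 1)
  linarith

lemma farey_lower (x : ℝ) (hx : Irrational x) (h0 : 0 < x) (h1 : x < 1) (n : ℕ) (hn : 0 < n)
    (c δ : ℝ) (hc : 0 < c) (hδ : 0 < δ) (hδ1 : δ ≤ 1)
    (h : ∀ (k : ℕ) (m : ℤ), 0 < k → c ≤ |x - m / k| * (k : ℝ) ^ (2 + δ)) :
    (2 - δ) * (Real.log n - Real.log 2) - |Real.log c| ≤
      -Real.log ((volume (fareyInterval n x)).toReal) := by
  obtain ⟨p1, q1, p2, q2, a1, a2, a3, a4, a5, a6, a7, a8, a9, a10⟩ := farey_pair x hx h0 h1 n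
  rw [farey_vol x n p1 q1 p2 q2 a1 a2 a3 a4 a5 a6 a7 a8 a9 a10]
  have r1 : (0 : ℝ) < q1 := by exact_mod_cast a1
  have r2 : (0 : ℝ) < q2 := by exact_mod_cast a2
  rw [one_div, Real.log_inv, neg_neg, Real.log_mul r1.ne' r2.ne']
  have hd : (p2 : ℝ) * q1 = p1 * q2 + 1 := by exact_mod_cast a8
  have e : (p2 : ℝ) / q2 - (p1 : ℝ) / q1 = 1 / ((q1 : ℝ) * q2) := by
    field_simp
    linarith
  rcases le_total q1 q2 with hq | hq
  · refine farey_est c δ hc hδ hδ1 n q1 q2 a1 hq (by omega) hn _ (h q1 p1 a1) ?_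
    rw [← e, abs_le]
    push_cast
    constructor <;> linarith
  · rw [add_comm]
    refine farey_est c δ hc hδ hδ1 n q2 q1 a2 hq (by omega) hn _ (h q2 p2 a2) ?_
    rw [mul_comm, ← e, abs_le]
    push_cast
    constructor <;> linarith

/-- The Farey sequence of partitions is a.e. log-balanced with respect to the Lebesgue
measure on `[0,1]` with weight function `f_ℱ(n) = 2 log n`. -/
theorem farey_logBalanced_ae :
    ∀ᵐ x ∂(volume.restrict (Set.Icc (0 : ℝ) 1)),
      Tendsto (fun n : ℕ =>
          -Real.log ((volume (fareyInterval n x)).toReal) / (2 * Real.log n))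
        atTop (nhds 1) := by
  rw [ae_restrict_iff' measurableSet_Icc]
  have hirr : ∀ᵐ x : ℝ, Irrational x := (Set.countable_range ((↑) : ℚ → ℝ)).ae_notMem volume
  filter_upwards [hirr, ae_not_liouvilleWith] with x hx hL hI
  have h0 : 0 < x := lt_of_le_of_ne hI.1 (by simpa using (hx.ne_nat 0).symm)
  have h1 : x < 1 := lt_of_le_of_ne hI.2 (by simpa using (hx.ne_nat 1))
  have hlog : Tendsto (fun n : ℕ => Real.log n) atTop atTop :=
    Real.tendsto_log_atTop.comp tendsto_natCast_atTop_atTop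
  rw [tendsto_order]
  constructor
  · intro a ha
    set δ := min 1 (1 - a) with hδdef
    have hδ : 0 < δ := lt_min one_pos (by linarith)
    have hδ1 : δ ≤ 1 := min_le_left _ _
    have hδa : δ ≤ 1 - a := min_le_right _ _
    obtain ⟨c, hc, hcc⟩ := farey_dioph x hx (2 + δ) (hL _ (by linarith))
    filter_upwards [hlog.eventually_gt_atTop 0, eventually_gt_atTop 0,
      hlog.eventually_gt_atTop (((2 - δ) * Real.log 2 + |Real.log c|) / δ)] with n hn hn0 hn1
    have := farey_lower x hx h0 h1 n hn0 c δ hc hδ hδ1 hcc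
    rw [lt_div_iff₀ (by linarith)]
    rw [div_lt_iff₀ hδ] at hn1
    nlinarith [mul_le_mul_of_nonneg_right hδa hn.le]
  · intro b hb
    filter_upwards [hlog.eventually_gt_atTop 0, eventually_gt_atTop 0,
      hlog.eventually_gt_atTop (Real.log 2 / (b - 1))] with n hn hn0 hn1
    have := farey_upper x hx h0 h1 n
    have rn : (1 : ℝ) ≤ n := by exact_mod_cast hn0
    have h2 : Real.log (n + 1) ≤ Real.log 2 + Real.log n := by
      rw [← Real.log_mul two_ne_zero (by linarith)]
      exact Real.log_le_log (by linarith) (by linarith)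
    rw [div_lt_iff₀ (by linarith)]
    rw [div_lt_iff₀ (by linarith)] at hn1
    nlinarith
end
end

section
/- Let x ∈ [0,1] be irrational with convergents p_m/q_m and partial quotients a_m, and let n ∈ ℕ. Let m and r be the unique integers with (r+1)q_m + q_{m−1} ≤ n+1 < (r+2)q_m + q_{m−1}, m ≥ 0, and 0 ≤ r < a_{m+1}. Then the interval of the Farey partition F_n containing x is the open interval with endpoints p_m/q_m and ((r+1)p_m + p_{m−1})/((r+1)q_m + q_{m−1}) (the former being the left endpoint if m is even and the right endpoint if m is odd). In particular, |I_n^ℱ(x)| = 1/(((r+1)q_m + q_{m−1}) q_m). -/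
open MeasureTheory Filter Set

noncomputable section

lemma fareyInterval_of_det (n A B C D : ℕ) (x : ℝ) (hB : 0 < B) (hD : 0 < D)
    (hBn : B ≤ n + 1) (hDn : D ≤ n + 1) (hAB : A ≤ B) (hCD : C ≤ D) (hN : n + 1 < B + D)
    (hdet : (C : ℤ) * B - A * D = 1) (hl : (A : ℝ) / B < x) (hu : x < (C : ℝ) / D) :
    fareyInterval n x = Set.Ioo ((A : ℝ) / B) ((C : ℝ) / D) := by
  have hB' : (0 : ℝ) < B := by exact_mod_cast hB
  have hD' : (0 : ℝ) < D := by exact_mod_cast hD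
  have key : ∀ p q : ℕ, q ≠ 0 → q ≤ n + 1 → (A : ℝ) / B < (p : ℝ) / q →
      (p : ℝ) / q < (C : ℝ) / D → False := by
    intro p q hq hqn h1 h2
    have hq' : (0 : ℝ) < q := by exact_mod_cast Nat.pos_of_ne_zero hq
    rw [div_lt_div_iff₀ hB' hq'] at h1
    rw [div_lt_div_iff₀ hq' hD'] at h2
    have h1' : (A : ℤ) * q + 1 ≤ p * B := by exact_mod_cast h1
    have h2' : (p : ℤ) * D + 1 ≤ C * q := by exact_mod_cast h2
    have e : (q : ℤ) = B * (C * q - p * D) + D * (p * B - A * q) := by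
      linear_combination (-(q : ℤ)) * hdet
    have hBz : (0 : ℤ) < B := by exact_mod_cast hB
    have hDz : (0 : ℤ) < D := by exact_mod_cast hD
    have : (B : ℤ) + D ≤ q := by nlinarith
    omega
  have hgA : Nat.gcd A B = 1 := by
    have : IsCoprime (A : ℤ) B := ⟨-D, C, by linear_combination hdet⟩
    exact Nat.isCoprime_iff_coprime.mp this
  have hgC : Nat.gcd C D = 1 := by
    have : IsCoprime (C : ℤ) D := ⟨B, -A, by linear_combination hdet⟩
    exact Nat.isCoprime_iff_coprime.mp this
  have hG : IsGreatest (fareyPts n ∩ Set.Iio x) ((A : ℝ) / B) := by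
    refine ⟨⟨⟨A, B, hB.ne', hBn, hAB, hgA, rfl⟩, hl⟩, ?_⟩
    rintro y ⟨⟨p, q, hq, hqn, -, -, rfl⟩, hy⟩
    by_contra! h
    exact key p q hq hqn h (lt_trans hy hu)
  have hL : IsLeast (fareyPts n ∩ Set.Ioi x) ((C : ℝ) / D) := by
    refine ⟨⟨⟨C, D, hD.ne', hDn, hCD, hgC, rfl⟩, hu⟩, ?_⟩
    rintro y ⟨⟨p, q, hq, hqn, -, -, rfl⟩, hy⟩
    by_contra! h
    exact key p q hq hqn (lt_trans hl hy) h
  rw [fareyInterval, hG.csSup_eq, hL.csInf_eq]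

lemma gauss_iter (x : ℝ) (hx : x ∈ Set.Icc (0 : ℝ) 1) (hirr : Irrational x) (m : ℕ) :
    Irrational ((fun y : ℝ => Int.fract (1 / y))^[m] x) ∧
    0 < ((fun y : ℝ => Int.fract (1 / y))^[m] x) ∧
    ((fun y : ℝ => Int.fract (1 / y))^[m] x) < 1 := by
  induction m with
  | zero =>
    refine ⟨hirr, lt_of_le_of_ne hx.1 ?_, lt_of_le_of_ne hx.2 ?_⟩
    · exact fun h => hirr.ne_zero h.symm
    · exact hirr.ne_one
  | succ m ih =>
    rw [Function.iterate_succ_apply']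
    set t := (fun y : ℝ => Int.fract (1 / y))^[m] x
    have h : Irrational (Int.fract (1 / t)) := by
      rw [Int.fract, one_div]
      exact ih.1.inv.sub_intCast _
    exact ⟨h, lt_of_le_of_ne (Int.fract_nonneg _) (fun e => h.ne_zero e.symm), Int.fract_lt_one _⟩

lemma cf_facts (x : ℝ) (hx : x ∈ Set.Icc (0 : ℝ) 1) (hirr : Irrational x) (m : ℕ) :
    (x * (cfq x (m + 1) + ((fun y : ℝ => Int.fract (1 / y))^[m] x) * cfq x m) =
      cfp x (m + 1) + ((fun y : ℝ => Int.fract (1 / y))^[m] x) * cfp x m) ∧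
    ((cfp x m : ℤ) * cfq x (m + 1) - cfp x (m + 1) * cfq x m = (-1) ^ m) ∧
    0 < cfq x (m + 1) ∧ cfp x (m + 1) ≤ cfq x (m + 1) ∧
    cfp x (m + 1) + cfp x m ≤ cfq x (m + 1) + cfq x m := by
  induction m with
  | zero => simp [cfp, cfq]
  | succ m ih =>
    obtain ⟨h1, h2, h3, h4, h5⟩ := ih
    obtain ⟨-, ht0, ht1⟩ := gauss_iter x hx hirr m
    rw [Function.iterate_succ_apply']
    have ha : 1 ≤ cfa x m := by
      rw [cfa, Nat.one_le_floor_iff, le_div_iff₀ ht0]; linarith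
    have hfl : Int.fract (1 / ((fun y : ℝ => Int.fract (1 / y))^[m] x)) =
        1 / ((fun y : ℝ => Int.fract (1 / y))^[m] x) - cfa x m := by
      rw [cfa, Int.fract, natCast_floor_eq_intCast_floor (by positivity)]
    have e1 : cfp x (m + 1 + 1) = cfa x m * cfp x (m + 1) + cfp x m := rfl
    have e2 : cfq x (m + 1 + 1) = cfa x m * cfq x (m + 1) + cfq x m := rfl
    simp only [hfl]
    set t := (fun y : ℝ => Int.fract (1 / y))^[m] x
    rw [e1, e2]
    obtain ⟨b, hb⟩ := Nat.exists_eq_add_of_le ha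
    refine ⟨?_, ?_, by positivity, ?_, ?_⟩
    · push_cast
      field_simp
      linear_combination h1
    · push_cast
      rw [pow_succ]
      linear_combination -h2
    · rw [hb]; nlinarith
    · rw [hb]; nlinarith

theorem farey_interval_eq (x : ℝ) (hx : x ∈ Set.Icc (0 : ℝ) 1) (hirr : Irrational x)
    (n m r : ℕ)
    (h1 : (r + 1) * cfq x (m + 1) + cfq x m ≤ n + 1)
    (h2 : n + 1 < (r + 2) * cfq x (m + 1) + cfq x m)
    (hr : r < cfa x m) :
    fareyInterval n x =
      (if Even m then
        Set.Ioo ((cfp x (m + 1) : ℝ) / (cfq x (m + 1) : ℝ))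
          ((((r + 1) * cfp x (m + 1) + cfp x m : ℕ) : ℝ) /
            (((r + 1) * cfq x (m + 1) + cfq x m : ℕ) : ℝ))
      else
        Set.Ioo ((((r + 1) * cfp x (m + 1) + cfp x m : ℕ) : ℝ) /
            (((r + 1) * cfq x (m + 1) + cfq x m : ℕ) : ℝ))
          ((cfp x (m + 1) : ℝ) / (cfq x (m + 1) : ℝ))) ∧
    (volume (fareyInterval n x)).toReal =
      1 / ((((r + 1) * cfq x (m + 1) + cfq x m : ℕ) : ℝ) * (cfq x (m + 1) : ℝ)) := by
  obtain ⟨hX, hdet, hq, hpq, hpq2⟩ := cf_facts x hx hirr m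
  obtain ⟨hti, ht0, ht1⟩ := gauss_iter x hx hirr m
  have hrt : ((r : ℝ) + 1) * ((fun y : ℝ => Int.fract (1 / y))^[m] x) < 1 := by
    have h : ((r + 1 : ℕ) : ℝ) ≤ 1 / ((fun y : ℝ => Int.fract (1 / y))^[m] x) :=
      (Nat.le_floor_iff (by positivity)).mp hr
    rw [le_div_iff₀ ht0] at h
    push_cast at h
    refine lt_of_le_of_ne h ?_
    have := hti.natCast_mul (m := r + 1) (by omega)
    push_cast at this
    exact this.ne_one
  set t := (fun y : ℝ => Int.fract (1 / y))^[m] x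
  set Q := cfq x (m + 1)
  set P := cfp x (m + 1)
  set q := cfq x m
  set p := cfp x m
  obtain ⟨Q', hQ'⟩ : ∃ Q', Q' = (r + 1) * Q + q := ⟨_, rfl⟩
  obtain ⟨P', hP'⟩ : ∃ P', P' = (r + 1) * P + p := ⟨_, rfl⟩
  have hX' : x * (t * Q' + (1 - (r + 1) * t) * Q) = t * P' + (1 - (r + 1) * t) * P := by
    rw [hQ', hP']; push_cast; linear_combination hX
  have hdet' : (P' : ℤ) * Q - P * Q' = (-1) ^ m := by
    rw [hQ', hP']; push_cast; linear_combination hdet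
  have hPQ' : P' ≤ Q' := by rw [hQ', hP']; nlinarith
  have hQQ' : Q ≤ Q' := by rw [hQ']; nlinarith
  have hN : n + 1 < Q + Q' := by rw [hQ']; nlinarith
  rw [← hQ'] at h1 ⊢
  rw [← hP']
  have hQ'0 : 0 < Q' := by omega
  have hQR : (0 : ℝ) < Q := by exact_mod_cast hq
  have hQR' : (0 : ℝ) < Q' := by exact_mod_cast hQ'0
  have hs : 0 < 1 - (r + 1) * t := by linarith
  clear_value t Q P q p
  have hW : 0 < t * Q' + (1 - (r + 1) * t) * Q := by positivity
  have hdR : (P' : ℝ) * Q - P * Q' = (-1) ^ m := by exact_mod_cast hdet'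
  have i1 : (x * Q - P) * (t * Q' + (1 - (r + 1) * t) * Q) = t * (-1) ^ m := by
    linear_combination Q * hX' + t * hdR
  have i2 : (P' - x * Q') * (t * Q' + (1 - (r + 1) * t) * Q) = (1 - (r + 1) * t) * (-1) ^ m := by
    linear_combination -Q' * hX' + (1 - (r + 1) * t) * hdR
  by_cases hm : Even m
  · rw [hm.neg_one_pow] at hdet' hdR i1 i2
    have j1 : 0 < x * Q - P := pos_of_mul_pos_left (by rw [i1]; linarith) hW.le
    have j2 : 0 < P' - x * Q' := pos_of_mul_pos_left (by rw [i2]; linarith) hW.le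
    have hI := fareyInterval_of_det n P Q P' Q' x hq hQ'0 (by omega) h1 hpq hPQ' hN hdet'
      (by rw [div_lt_iff₀ hQR]; linarith) (by rw [lt_div_iff₀ hQR']; linarith)
    rw [if_pos hm, hI]
    refine ⟨rfl, ?_⟩
    have e : (P' : ℝ) / Q' - P / Q = 1 / (Q' * Q) := by
      field_simp; linear_combination hdR
    rw [Real.volume_Ioo, e, ENNReal.toReal_ofReal (by positivity)]
  · rw [(Nat.not_even_iff_odd.mp hm).neg_one_pow] at hdet' hdR i1 i2
    have j1 : 0 < P - x * Q := pos_of_mul_pos_left (b := t * Q' + (1 - (r + 1) * t) * Q) (by linarith) hW.le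
    have j2 : 0 < x * Q' - P' := pos_of_mul_pos_left (b := t * Q' + (1 - (r + 1) * t) * Q) (by linarith) hW.le
    have hI := fareyInterval_of_det n P' Q' P Q x hQ'0 hq h1 (by omega) hPQ' hpq (by omega)
      (by linarith)
      (by rw [div_lt_iff₀ hQR']; linarith) (by rw [lt_div_iff₀ hQR]; linarith)
    rw [if_neg hm, hI]
    refine ⟨rfl, ?_⟩
    have e : (P : ℝ) / Q - P' / Q' = 1 / (Q' * Q) := by
      field_simp; linear_combination -hdR
    rw [Real.volume_Ioo, e, ENNReal.toReal_ofReal (by positivity)]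
end
end
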